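/- arXiv:1512.01758 — 6 statements merged into one kernel-verified Lean document; each statement's English description precedes it below -/
import Mathlib

section
/- For rational q ∈ ℚ^{dT} and rational r ∈ ℚ ∩ (0,1), let p_{q,r} be an 𝓕-measurable random variable with values in ℝ ∪ {±∞}, and suppose the family is monotone in the sense that p_{q,r} ≤ p_{q',r'} a.s. whenever r' ≥ r + |q − q'|. Then the map V : Ω × ℝ^{dT} → ℝ ∪ {±∞} defined by V(ω,x) = inf{ p_{q,r}(ω) : q ∈ ℚ^{dT}, r ∈ ℚ ∩ (0,1), |x − q| < r } is a normal integrand: its hypographical correspondence ω ↦ {(x,β) ∈ ℝ^{dT} × ℝ : β ≤ V(ω,x)} is closed-valued and measurable; in particular x ↦ V(ω,x) is upper semicontinuous for every ω. -/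
open MeasureTheory Filter Topology

noncomputable section

/-- The map `V(ω,x) = inf { p_{q,r}(ω) : q ∈ ℚ^{dT}, r ∈ ℚ ∩ (0,1), |x − q| < r }`. -/
def Vconstr {Ω : Type*} {T d : ℕ}
    (p : (Fin T → Fin d → ℚ) → ℚ → Ω → EReal) (ω : Ω) (x : Fin T → Fin d → ℝ) : EReal :=
  ⨅ q : Fin T → Fin d → ℚ, ⨅ r : ℚ,
    ⨅ _ : 0 < r ∧ r < 1 ∧ ‖x - fun t i => ((q t i : ℝ))‖ < (r : ℝ), p q r ω

/-- The hypographical correspondence of `Vconstr p`. -/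
def VconstrHypo {Ω : Type*} {T d : ℕ}
    (p : (Fin T → Fin d → ℚ) → ℚ → Ω → EReal) (ω : Ω) :
    Set ((Fin T → Fin d → ℝ) × ℝ) :=
  {xb : (Fin T → Fin d → ℝ) × ℝ | (xb.2 : EReal) ≤ Vconstr p ω xb.1}

/-!
An infimum of values attached to open sets drops below `b` at `x` as soon as one set around `x`
carries a value below `b`, so it is upper semicontinuous and its hypograph is closed. By
compactness, it stays below `b` on a compact set `K` exactly when finitely many such sets cover
`K`; countably many finite families are available, so the event that `K` contains a point with
value at least `b` is measurable. Since hypographs are closed downwards, an open set `G` meets one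
exactly when it does so at a rational height, and each horizontal slice of `G` is σ-compact.
-/

/-- The infimum of the values `f i` over the indices `i` whose set `U i` contains `x`;
it is `⊤` at points that no `U i` contains. -/
def iInfMem {ι X α : Type*} [CompleteLattice α] (U : ι → Set X) (f : ι → α) (x : X) : α :=
  ⨅ i, ⨅ _ : x ∈ U i, f i

section iInfMem

variable {ι X α Ω : Type*} [CompleteLinearOrder α] {U : ι → Set X} {b : α}

theorem iInfMem_lt_iff {f : ι → α} {x : X} : iInfMem U f x < b ↔ ∃ i, x ∈ U i ∧ f i < b := by
  simp only [iInfMem, iInf_lt_iff, exists_prop]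

variable [TopologicalSpace X]

theorem upperSemicontinuous_iInfMem (hU : ∀ i, IsOpen (U i)) (f : ι → α) :
    UpperSemicontinuous (iInfMem U f) := by
  intro x b hx
  obtain ⟨i, hxi, hi⟩ := iInfMem_lt_iff.1 hx
  filter_upwards [(hU i).mem_nhds hxi] with y hyi
  exact iInfMem_lt_iff.2 ⟨i, hyi, hi⟩

theorem forall_mem_iInfMem_lt_iff_exists_finset (hU : ∀ i, IsOpen (U i)) {K : Set X}
    (hK : IsCompact K) {f : ι → α} :
    (∀ x ∈ K, iInfMem U f x < b) ↔ ∃ F : Finset ι, K ⊆ ⋃ i ∈ F, U i ∧ ∀ i ∈ F, f i < b := by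
  constructor
  · intro h
    have hcover : K ⊆ ⋃ i ∈ {i | f i < b}, U i := fun x hx => by
      obtain ⟨i, hxi, hi⟩ := iInfMem_lt_iff.1 (h x hx)
      exact Set.mem_biUnion hi hxi
    obtain ⟨s, hsb, hs, hKs⟩ := hK.elim_finite_subcover_image (fun i _ => hU i) hcover
    lift s to Finset ι using hs
    exact ⟨s, hKs, hsb⟩
  · rintro ⟨F, hKF, hF⟩ x hx
    obtain ⟨i, hi, hxi⟩ := Set.mem_iUnion₂.1 (hKF hx)
    exact iInfMem_lt_iff.2 ⟨i, hxi, hF i hi⟩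

theorem measurableSet_exists_mem_le_iInfMem [MeasurableSpace Ω] [Countable ι]
    (hU : ∀ i, IsOpen (U i)) {f : ι → Ω → α} (hf : ∀ i, MeasurableSet {ω | f i ω < b})
    {K : Set X} (hK : IsCompact K) :
    MeasurableSet {ω | ∃ x ∈ K, b ≤ iInfMem U (f · ω) x} := by
  have hcompl : {ω | ∃ x ∈ K, b ≤ iInfMem U (f · ω) x}ᶜ =
      ⋃ (F : Finset ι) (_ : K ⊆ ⋃ i ∈ F, U i), ⋂ i ∈ F, {ω | f i ω < b} := by
    ext ω
    simpa using forall_mem_iInfMem_lt_iff_exists_finset hU hK (f := (f · ω))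
  rw [← MeasurableSet.compl_iff, hcompl]
  exact .iUnion fun F => .iUnion fun _ => F.measurableSet_biInter fun i _ => hf i

end iInfMem

/-- The hypograph of an extended-real function, restricted to real heights, which is
the correspondence that defines normal integrands. -/
def realHypograph {X : Type*} (g : X → EReal) : Set (X × ℝ) :=
  {z | (z.2 : EReal) ≤ g z.1}

section realHypograph

variable {X : Type*} [TopologicalSpace X] {g : X → EReal}

theorem isClosed_realHypograph_iff_upperSemicontinuous :
    IsClosed (realHypograph g) ↔ UpperSemicontinuous g := by
  constructor
  · intro hclosed x y hxy
    obtain ⟨b, hxb, hby⟩ := EReal.lt_iff_exists_real_btwn.1 hxy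
    have hslice : IsClosed {x' | (b : EReal) ≤ g x'} := hclosed.preimage (.prodMk_left b)
    filter_upwards [hslice.isOpen_compl.mem_nhds (not_le.2 hxb)] with x' hx'
    exact (not_le.1 fun hle => hx' hle).trans hby
  · intro hg
    exact hg.IsClosed_hypograph.preimage
      (continuous_fst.prodMk (continuous_coe_real_ereal.comp continuous_snd))

theorem inter_realHypograph_nonempty_iff_exists_rat {G : Set (X × ℝ)} (hG : IsOpen G) :
    (G ∩ realHypograph g).Nonempty ↔
      ∃ b : ℚ, ∃ x ∈ {x | (x, (b : ℝ)) ∈ G}, ((b : ℝ) : EReal) ≤ g x := by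
  constructor
  · rintro ⟨⟨x, β⟩, hxG, hβ⟩
    have hslice : {b | (x, b) ∈ G} ∈ 𝓝 β := (hG.preimage (.prodMk_right x)).mem_nhds hxG
    obtain ⟨l, hlβ, hl⟩ := exists_Ioc_subset_of_mem_nhds hslice (exists_lt β)
    obtain ⟨b, hlb, hbβ⟩ := exists_rat_btwn hlβ
    exact ⟨b, x, hl ⟨hlb, hbβ.le⟩, (EReal.coe_le_coe hbβ.le).trans hβ⟩
  · rintro ⟨b, x, hxG, hb⟩
    exact ⟨(x, b), hxG, hb⟩

end realHypograph

theorem isSigmaCompact_of_isOpen {X : Type*} [TopologicalSpace X] [LocallyCompactSpace X]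
    [SecondCountableTopology X] {G : Set X} (hG : IsOpen G) : IsSigmaCompact G :=
  have := hG.locallyCompactSpace
  isSigmaCompact_iff_sigmaCompactSpace.2 inferInstance

theorem measurableSet_exists_mem_of_isSigmaCompact {Ω X : Type*} [MeasurableSpace Ω]
    [TopologicalSpace X] {Q : Ω → X → Prop}
    (hQ : ∀ K, IsCompact K → MeasurableSet {ω | ∃ x ∈ K, Q ω x}) {S : Set X}
    (hS : IsSigmaCompact S) : MeasurableSet {ω | ∃ x ∈ S, Q ω x} := by
  obtain ⟨K, hK, rfl⟩ := hS
  have hunion : {ω | ∃ x ∈ ⋃ n, K n, Q ω x} = ⋃ n, {ω | ∃ x ∈ K n, Q ω x} := by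
    ext ω
    simp only [Set.mem_iUnion, Set.mem_ofPred_eq]
    tauto
  rw [hunion]
  exact .iUnion fun n => hQ (K n) (hK n)

/-- A normal integrand: its hypographical correspondence is closed-valued and measurable.
Measurability is tested on all open sets rather than on open balls only, so that the notion makes
sense without a metric. -/
structure IsNormalIntegrand {Ω X : Type*} [MeasurableSpace Ω] [TopologicalSpace X]
    (V : Ω → X → EReal) : Prop where
  isClosed_realHypograph : ∀ ω, IsClosed (realHypograph (V ω))
  measurableSet_inter_nonempty : ∀ G : Set (X × ℝ), IsOpen G →
    MeasurableSet {ω | (G ∩ realHypograph (V ω)).Nonempty}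

section IsNormalIntegrand

variable {Ω X : Type*} [MeasurableSpace Ω] [TopologicalSpace X] {V : Ω → X → EReal}

theorem IsNormalIntegrand.upperSemicontinuous (hV : IsNormalIntegrand V) (ω : Ω) :
    UpperSemicontinuous (V ω) :=
  isClosed_realHypograph_iff_upperSemicontinuous.1 (hV.isClosed_realHypograph ω)

theorem isNormalIntegrand_of_measurableSet_isCompact [LocallyCompactSpace X]
    [SecondCountableTopology X] (husc : ∀ ω, UpperSemicontinuous (V ω))
    (hmeas : ∀ K, IsCompact K → ∀ b : ℝ, MeasurableSet {ω | ∃ x ∈ K, (b : EReal) ≤ V ω x}) :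
    IsNormalIntegrand V where
  isClosed_realHypograph ω := isClosed_realHypograph_iff_upperSemicontinuous.2 (husc ω)
  measurableSet_inter_nonempty G hG := by
    have hrat : {ω | (G ∩ realHypograph (V ω)).Nonempty} =
        ⋃ b : ℚ, {ω | ∃ x ∈ {x | (x, (b : ℝ)) ∈ G}, ((b : ℝ) : EReal) ≤ V ω x} := by
      ext ω
      simpa using inter_realHypograph_nonempty_iff_exists_rat hG
    rw [hrat]
    exact .iUnion fun b =>
      measurableSet_exists_mem_of_isSigmaCompact (fun K hK => hmeas K hK b)
        (isSigmaCompact_of_isOpen (hG.preimage (.prodMk_left (b : ℝ))))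

theorem stmt1_general {ι : Type*} [Countable ι] [LocallyCompactSpace X]
    [SecondCountableTopology X] {U : ι → Set X} (hU : ∀ i, IsOpen (U i)) {f : ι → Ω → EReal}
    (hf : ∀ i, Measurable (f i)) : IsNormalIntegrand fun ω => iInfMem U (f · ω) :=
  isNormalIntegrand_of_measurableSet_isCompact (fun ω => upperSemicontinuous_iInfMem hU (f · ω))
    fun _ hK _ => measurableSet_exists_mem_le_iInfMem hU
      (fun i => measurableSet_lt (hf i) measurable_const) hK

end IsNormalIntegrand

/-- The open ball in `ℝ^{dT}` with rational center and radius, taken to be empty unless the radius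
lies in `(0, 1)`, so that the constraint on `r` in `Vconstr` becomes part of membership. -/
def ratBall {T d : ℕ} (a : (Fin T → Fin d → ℚ) × ℚ) : Set (Fin T → Fin d → ℝ) :=
  {x | 0 < a.2 ∧ a.2 < 1 ∧ ‖x - fun t i => (a.1 t i : ℝ)‖ < a.2}

theorem isOpen_ratBall {T d : ℕ} (a : (Fin T → Fin d → ℚ) × ℚ) : IsOpen (ratBall a) :=
  isOpen_const.and (isOpen_const.and (isOpen_lt (by fun_prop) continuous_const))

theorem Vconstr_eq_iInfMem_ratBall {Ω : Type*} {T d : ℕ}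
    (p : (Fin T → Fin d → ℚ) → ℚ → Ω → EReal) :
    Vconstr p = fun ω => iInfMem ratBall fun a => p a.1 a.2 ω := by
  ext ω x
  simp only [Vconstr, iInfMem, ratBall, iInf_prod, Set.mem_ofPred_eq]

/-- given a monotone family `p_{q,r}` of measurable extended random
variables, the map `V(ω,x) = inf { p_{q,r}(ω) : |x − q| < r }` is a normal integrand:
its hypographical correspondence is closed valued and measurable; in particular
`x ↦ V(ω,x)` is upper semicontinuous for every `ω`. -/
theorem stmt1 {Ω : Type*} {mΩ : MeasurableSpace Ω} (P : Measure Ω) [IsProbabilityMeasure P]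
    (T d : ℕ) (hT : 1 ≤ T) (hd : 1 ≤ d)
    (p : (Fin T → Fin d → ℚ) → ℚ → Ω → EReal)
    (hpmeas : ∀ q r, Measurable (p q r))
    (hpmono : ∀ (q q' : Fin T → Fin d → ℚ) (r r' : ℚ),
      (r : ℝ) + ‖(fun t i => ((q t i : ℝ))) - (fun t i => ((q' t i : ℝ)) :
          Fin T → Fin d → ℝ)‖ ≤ (r' : ℝ) →
      ∀ᵐ ω ∂P, p q r ω ≤ p q' r' ω) :
    -- closed valued
    (∀ ω, IsClosed (VconstrHypo p ω)) ∧
    -- measurable correspondence: the preimage condition holds for every open ball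
    (∀ (c : (Fin T → Fin d → ℝ) × ℝ) (s : ℝ),
      MeasurableSet {ω | (Metric.ball c s ∩ VconstrHypo p ω).Nonempty}) ∧
    -- in particular, upper semicontinuity in `x` for every `ω`
    (∀ ω, UpperSemicontinuous (Vconstr p ω)) :=
  have hV : IsNormalIntegrand (Vconstr p) :=
    Vconstr_eq_iInfMem_ratBall p ▸ stmt1_general isOpen_ratBall fun a => hpmeas a.1 a.2
  ⟨hV.isClosed_realHypograph, fun _ _ => hV.measurableSet_inter_nonempty _ Metric.isOpen_ball,
    hV.upperSemicontinuous⟩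

end
end

section
/- Let V̂ be a market model, and for q ∈ ℚ^{dT}, r ∈ ℚ ∩ (0,1) let p_{q,r} be the essential supremum of { V̂(ϑ) : ϑ ∈ 𝒜, ‖ϑ − q‖_∞ < r } (i.e. a measurable random variable with p_{q,r} ≥ V̂(ϑ) a.s. for every admissible ϑ in this set, and minimal with this property), and define V(ω,x) = inf{ p_{q,r}(ω) : q ∈ ℚ^{dT}, r ∈ ℚ ∩ (0,1), |x − q| < r }. Then for every strategy ϑ ∈ 𝒜 one has V̂(ϑ)(ω) ≤ V(ω, ϑ(ω)) for almost every ω. -/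
open MeasureTheory Filter Topology
open scoped ENNReal NNReal

noncomputable section

/-- A strategy `ϑ` is adapted to the filtration `ℱ`. -/
def AdaptedStrat {Ω : Type*} {T d : ℕ} (ℱ : Fin T → MeasurableSpace Ω)
    (ϑ : Ω → Fin T → Fin d → ℝ) : Prop :=
  ∀ t : Fin T, Measurable[ℱ t] fun ω => ϑ ω t

/-- `‖ϑ − q‖_∞ < r` : the essential supremum of `|ϑ(ω) − q|` is smaller than `r`. -/
def InLinftyBall {Ω : Type*} {mΩ : MeasurableSpace Ω} {T d : ℕ} (P : Measure Ω)
    (q : Fin T → Fin d → ℚ) (r : ℚ) (ϑ : Ω → Fin T → Fin d → ℝ) : Prop :=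
  essSup (fun ω => (‖ϑ ω - fun t i => ((q t i : ℝ))‖₊ : ℝ≥0∞)) P < ENNReal.ofReal (r : ℝ)

/-!
Fix a ball with centre `a` and radius `r`, and let `c < r`. Resetting `ϑ` to `a`, separately in
each coordinate `t`, wherever `ϑ_t` is farther than `c` from `a_t` produces an adapted strategy
that lies uniformly within `c` of `a`, so the bound attached to the ball dominates its value. On
the event that `ϑ` is within `c` of `a` the two strategies coincide coordinate by coordinate on
events observable at the corresponding times, so locality gives them the same value there.
Exhausting the open ball by countably many `c`, and then running through the countably many
balls, gives the bound by the infimum.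
-/

section Locality

variable {Ω ι β : Type*} {E : ι → Type*} [∀ i, MeasurableSpace (E i)]

/-- Adaptedness of the strategy `ϑ`: its coordinate at each time `t` is `ℱ t`-measurable. The
times form an arbitrary index type, and the `σ`-algebras an arbitrary family. -/
def IsAdapted (ℱ : ι → MeasurableSpace Ω) (ϑ : Ω → ∀ i, E i) : Prop :=
  ∀ t, Measurable[ℱ t] fun ω => ϑ ω t

variable [∀ i, Zero (E i)] [DecidableEq ι] {mΩ : MeasurableSpace Ω}

/-- Locality, axiom (A2): setting the coordinate of an adapted strategy at time `t` to zero
outside an event `A ∈ ℱ t` does not change the value of `V` on `A`, up to a null set. -/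
def HasLocality (μ : Measure Ω) (ℱ : ι → MeasurableSpace Ω) (V : (Ω → ∀ i, E i) → Ω → β) : Prop :=
  ∀ (t : ι) (A : Set Ω), MeasurableSet[ℱ t] A → ∀ ϑ, IsAdapted ℱ ϑ →
    ∀ᵐ ω ∂μ, ω ∈ A →
      V ϑ ω = V (fun ω' => Function.update (ϑ ω') t (A.indicator (fun ω'' => ϑ ω'' t) ω')) ω

variable {μ : Measure Ω} {ℱ : ι → MeasurableSpace Ω} {V : (Ω → ∀ i, E i) → Ω → β}
  {ϑ ψ : Ω → ∀ i, E i} {A : ι → Set Ω}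

theorem IsAdapted.piecewise_indicator (hϑ : IsAdapted ℱ ϑ) (hA : ∀ t, MeasurableSet[ℱ t] (A t))
    (S : Finset ι) :
    IsAdapted ℱ fun ω => S.piecewise (fun s => (A s).indicator (fun ω' => ϑ ω' s) ω) (ϑ ω) := by
  intro t
  by_cases ht : t ∈ S
  · simpa only [S.piecewise_eq_of_mem _ _ ht] using (hϑ t).indicator (hA t)
  · simpa only [S.piecewise_eq_of_notMem _ _ ht] using hϑ t

theorem HasLocality.ae_eq_piecewise_indicator (hV : HasLocality μ ℱ V) (hϑ : IsAdapted ℱ ϑ)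
    (hA : ∀ t, MeasurableSet[ℱ t] (A t)) (S : Finset ι) :
    ∀ᵐ ω ∂μ, (∀ t ∈ S, ω ∈ A t) →
      V ϑ ω =
        V (fun ω' => S.piecewise (fun s => (A s).indicator (fun ω'' => ϑ ω'' s) ω') (ϑ ω')) ω := by
  induction S using Finset.induction_on with
  | empty => simp
  | insert t S ht ih =>
    filter_upwards [ih, hV t (A t) (hA t) _ (hϑ.piecewise_indicator hA S)] with ω hS hstep hω
    rw [hS fun s hs => hω s (Finset.mem_insert_of_mem hs),
      hstep (hω t (Finset.mem_insert_self t S))]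
    simp only [S.piecewise_eq_of_notMem _ _ ht, Finset.piecewise_insert]

theorem HasLocality.ae_eq_of_eqOn [Finite ι] (hV : HasLocality μ ℱ V) (hϑ : IsAdapted ℱ ϑ)
    (hψ : IsAdapted ℱ ψ) (hA : ∀ t, MeasurableSet[ℱ t] (A t))
    (heq : ∀ t, Set.EqOn (fun ω => ϑ ω t) (fun ω => ψ ω t) (A t)) :
    ∀ᵐ ω ∂μ, (∀ t, ω ∈ A t) → V ϑ ω = V ψ ω := by
  have := Fintype.ofFinite ι
  filter_upwards [hV.ae_eq_piecewise_indicator hϑ hA Finset.univ,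
    hV.ae_eq_piecewise_indicator hψ hA Finset.univ] with ω hωϑ hωψ hω
  rw [hωϑ fun t _ => hω t, hωψ fun t _ => hω t]
  simp only [Finset.piecewise_univ, fun t => Set.indicator_congr (heq t)]

end Locality

section Reset

variable {Ω ι : Type*} {E : ι → Type*} [∀ i, PseudoEMetricSpace (E i)]
  {a x : ∀ i, E i} {c : ℝ≥0∞}

/-- The point `x` with each coordinate farther than `c` from that of `a` reset to that of `a`.
Working coordinate by coordinate keeps adapted strategies adapted. -/
def resetFar (a : ∀ i, E i) (c : ℝ≥0∞) (x : ∀ i, E i) : ∀ i, E i :=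
  fun i => if edist (x i) (a i) ≤ c then x i else a i

theorem resetFar_apply_of_edist_le {i : ι} (h : edist (x i) (a i) ≤ c) :
    resetFar a c x i = x i :=
  if_pos h

theorem edist_resetFar_le [Fintype ι] : edist (resetFar a c x) a ≤ c := by
  refine edist_pi_le_iff.2 fun i => ?_
  unfold resetFar
  split_ifs with h
  · exact h
  · simp only [edist_self, zero_le]

variable [∀ i, MeasurableSpace (E i)] [∀ i, OpensMeasurableSpace (E i)]
  {ℱ : ι → MeasurableSpace Ω} {ϑ : Ω → ∀ i, E i}

theorem IsAdapted.measurableSet_edist_le (hϑ : IsAdapted ℱ ϑ) (a : ∀ i, E i) (c : ℝ≥0∞) (t : ι) :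
    MeasurableSet[ℱ t] {ω | edist (ϑ ω t) (a t) ≤ c} :=
  hϑ t Metric.isClosed_closedEBall.measurableSet

theorem IsAdapted.resetFar (hϑ : IsAdapted ℱ ϑ) (a : ∀ i, E i) (c : ℝ≥0∞) :
    IsAdapted ℱ fun ω => resetFar a c (ϑ ω) :=
  fun t => Measurable.ite (hϑ.measurableSet_edist_le a c t) (hϑ t) measurable_const

end Reset

section BallBounds

variable {Ω ι β : Type*} [Fintype ι] [DecidableEq ι] {E : ι → Type*}
  [∀ i, PseudoEMetricSpace (E i)] [∀ i, Zero (E i)] [∀ i, MeasurableSpace (E i)]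
  [∀ i, OpensMeasurableSpace (E i)] {mΩ : MeasurableSpace Ω} {μ : Measure Ω}
  {ℱ : ι → MeasurableSpace Ω} {V : (Ω → ∀ i, E i) → Ω → β} {ϑ : Ω → ∀ i, E i}

theorem HasLocality.ae_eq_resetFar (hV : HasLocality μ ℱ V) (hϑ : IsAdapted ℱ ϑ)
    (a : ∀ i, E i) (c : ℝ≥0∞) :
    ∀ᵐ ω ∂μ, edist (ϑ ω) a ≤ c → V ϑ ω = V (fun ω' => resetFar a c (ϑ ω')) ω := by
  filter_upwards [hV.ae_eq_of_eqOn hϑ (hϑ.resetFar a c) (hϑ.measurableSet_edist_le a c)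
    fun t ω hω => (resetFar_apply_of_edist_le hω).symm] with ω hω hle
  exact hω (edist_pi_le_iff.1 hle)

theorem HasLocality.ae_le_of_edist_lt [LE β] (hV : HasLocality μ ℱ V) {a : ∀ i, E i}
    {r : ℝ≥0∞} {b : Ω → β}
    (hb : ∀ ψ, IsAdapted ℱ ψ → essSup (fun ω => edist (ψ ω) a) μ < r → V ψ ≤ᵐ[μ] b)
    (hϑ : IsAdapted ℱ ϑ) :
    ∀ᵐ ω ∂μ, edist (ϑ ω) a < r → V ϑ ω ≤ b ω := by
  have hsmaller : ∀ c < r, ∀ᵐ ω ∂μ, edist (ϑ ω) a ≤ c → V ϑ ω ≤ b ω := by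
    intro c hc
    have hball : essSup (fun ω => edist (resetFar a c (ϑ ω)) a) μ < r :=
      (essSup_le_of_ae_le c (.of_forall fun _ => edist_resetFar_le)).trans_lt hc
    filter_upwards [hV.ae_eq_resetFar hϑ a c, hb _ (hϑ.resetFar a c) hball] with ω heq hle hω
    exact (heq hω).trans_le hle
  obtain ⟨D, hD_countable, hD_dense⟩ := TopologicalSpace.exists_countable_dense ℝ≥0∞
  have hall : ∀ᵐ ω ∂μ, ∀ c ∈ D, c < r → edist (ϑ ω) a ≤ c → V ϑ ω ≤ b ω :=
    (ae_ball_iff hD_countable).2 fun c _ => eventually_imp_distrib_left.2 (hsmaller c)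
  filter_upwards [hall] with ω hω hlt
  obtain ⟨c, hcD, hac, hcr⟩ := hD_dense.exists_between hlt
  exact hω c hcD hcr hac.le

theorem stmt2_general [CompleteLattice β] {κ : Type*} [Countable κ] (hV : HasLocality μ ℱ V)
    {a : κ → ∀ i, E i} {r : κ → ℝ≥0∞} {p : κ → Ω → β}
    (hp : ∀ k ψ, IsAdapted ℱ ψ → essSup (fun ω => edist (ψ ω) (a k)) μ < r k → V ψ ≤ᵐ[μ] p k)
    (hϑ : IsAdapted ℱ ϑ) :
    ∀ᵐ ω ∂μ, V ϑ ω ≤ ⨅ (k) (_ : edist (ϑ ω) (a k) < r k), p k ω := by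
  filter_upwards [ae_all_iff.2 fun k => hV.ae_le_of_edist_lt (hp k) hϑ] with ω hω
  exact le_iInf₂ hω

end BallBounds

section RationalBalls

variable {Ω : Type*} {T d : ℕ}

theorem hasLocality_iff_ite {β : Type*} {mΩ : MeasurableSpace Ω} {P : Measure Ω}
    {ℱ : Fin T → MeasurableSpace Ω} {V : (Ω → Fin T → Fin d → ℝ) → Ω → β} :
    HasLocality P ℱ V ↔ ∀ (t : Fin T) (A : Set Ω), MeasurableSet[ℱ t] A →
      ∀ ϑ, AdaptedStrat ℱ ϑ → ∀ᵐ ω ∂P, ω ∈ A →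
        V ϑ ω = V (fun ω' s => if s = t then A.indicator (fun ω'' => ϑ ω'' t) ω'
          else ϑ ω' s) ω := by
  have hupdate (x : Fin T → Fin d → ℝ) (t : Fin T) (y : Fin d → ℝ) :
      Function.update x t y = fun s => if s = t then y else x s :=
    funext fun s => Function.update_apply x t y s
  simp only [HasLocality, IsAdapted, AdaptedStrat, hupdate]

theorem inLinftyBall_iff_essSup_edist_lt {mΩ : MeasurableSpace Ω} {P : Measure Ω}
    {q : Fin T → Fin d → ℚ} {r : ℚ} {ϑ : Ω → Fin T → Fin d → ℝ} :
    InLinftyBall P q r ϑ ↔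
      essSup (fun ω => edist (ϑ ω) fun t i => (q t i : ℝ)) P < ENNReal.ofReal r := by
  simp only [InLinftyBall, edist_eq_enorm_sub, enorm_eq_nnnorm]

theorem Vconstr_eq_iInf_edist_lt (p : (Fin T → Fin d → ℚ) → ℚ → Ω → EReal) (ω : Ω)
    (x : Fin T → Fin d → ℝ) :
    Vconstr p ω x =
      ⨅ (k : (Fin T → Fin d → ℚ) × {r : ℚ // 0 < r ∧ r < 1})
        (_ : edist x (fun t i => (k.1 t i : ℝ)) < ENNReal.ofReal k.2), p k.1 k.2 ω := by
  simp only [Vconstr, iInf_prod, iInf_subtype, iInf_and, edist_lt_ofReal, dist_eq_norm]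

end RationalBalls

/-- for a market model `V̂`, with `p_{q,r}` the essential supremum of
`{ V̂(ϑ) : ϑ ∈ 𝒜, ‖ϑ − q‖_∞ < r }` and
`V(ω,x) = inf { p_{q,r}(ω) : |x − q| < r, r ∈ (0,1) }`, one has
`V̂(ϑ) ≤ V(·,ϑ(·))` a.s. for every adapted strategy `ϑ`. -/
theorem stmt2 {Ω : Type*} {mΩ : MeasurableSpace Ω} (P : Measure Ω) [IsProbabilityMeasure P]
    (T d : ℕ) (hT : 1 ≤ T) (hd : 1 ≤ d)
    (ℱ : Fin T → MeasurableSpace Ω) (hℱmono : Monotone ℱ) (hℱle : ∀ t, ℱ t ≤ mΩ)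
    -- the market model V̂
    (Vh : (Ω → Fin T → Fin d → ℝ) → Ω → EReal)
    (hVhmeas : ∀ ϑ, AdaptedStrat ℱ ϑ → Measurable (Vh ϑ))
    (hVhnotTop : ∀ ϑ, AdaptedStrat ℱ ϑ → ∀ᵐ ω ∂P, Vh ϑ ω ≠ ⊤)
    -- (A1) normalization
    (hA1 : ∀ᵐ ω ∂P, Vh (fun _ _ _ => 0) ω = 0)
    -- (A2) locality
    (hA2 : ∀ (t : Fin T) (A : Set Ω), MeasurableSet[ℱ t] A →
      ∀ ϑ, AdaptedStrat ℱ ϑ →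
        ∀ᵐ ω ∂P, ω ∈ A →
          Vh ϑ ω = Vh (fun ω' s => if s = t then A.indicator (fun ω'' => ϑ ω'' t) ω'
            else ϑ ω' s) ω)
    -- `p q r` is the essential supremum of `{ V̂(ϑ) : ϑ ∈ 𝒜, ‖ϑ − q‖_∞ < r }` :
    (p : (Fin T → Fin d → ℚ) → ℚ → Ω → EReal)
    (hpmeas : ∀ q r, Measurable (p q r))
    (hpub : ∀ q r ϑ, AdaptedStrat ℱ ϑ → InLinftyBall P q r ϑ →
      ∀ᵐ ω ∂P, Vh ϑ ω ≤ p q r ω)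
    (hpmin : ∀ q r (m : Ω → EReal), Measurable m →
      (∀ ϑ, AdaptedStrat ℱ ϑ → InLinftyBall P q r ϑ → ∀ᵐ ω ∂P, Vh ϑ ω ≤ m ω) →
      ∀ᵐ ω ∂P, p q r ω ≤ m ω) :
    -- conclusion: V̂(ϑ)(ω) ≤ V(ω, ϑ(ω)) a.s. for every adapted strategy ϑ
    ∀ ϑ, AdaptedStrat ℱ ϑ → ∀ᵐ ω ∂P, Vh ϑ ω ≤ Vconstr p ω (ϑ ω) := by
  intro ϑ hϑ
  simp only [Vconstr_eq_iInf_edist_lt]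
  exact stmt2_general (hasLocality_iff_ite.2 hA2)
    (fun k ψ hψ hball => hpub k.1 k.2 ψ hψ (inLinftyBall_iff_essSup_edist_lt.2 hball)) hϑ

end
end

section
/- Let V̂ be a market model. Then V̂ is upper semicontinuous (with respect to L^∞ convergence of bounded strategies) if and only if for every sequence of strategies ϑⁿ ∈ 𝒜 converging almost surely to a strategy ϑ ∈ 𝒜 one has limsup_n V̂(ϑⁿ) ≤ V̂(ϑ) almost surely. -/
open MeasureTheory Filter Topology

noncomputable section

/-- A strategy is essentially bounded. -/
def EssBdd {Ω : Type*} {mΩ : MeasurableSpace Ω} {T d : ℕ} (P : Measure Ω)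
    (ϑ : Ω → Fin T → Fin d → ℝ) : Prop :=
  ∃ M : ℝ, ∀ᵐ ω ∂P, ‖ϑ ω‖ ≤ M

/-- Convergence of strategies in `L^∞`: `‖ϑⁿ − ϑ‖_∞ → 0`. -/
def LinftyTendsto {Ω : Type*} {mΩ : MeasurableSpace Ω} {T d : ℕ} (P : Measure Ω)
    (ϑn : ℕ → Ω → Fin T → Fin d → ℝ) (ϑ : Ω → Fin T → Fin d → ℝ) : Prop :=
  ∀ ε : ℝ, 0 < ε → ∀ᶠ n in atTop, ∀ᵐ ω ∂P, ‖ϑn n ω - ϑ ω‖ ≤ ε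

/-- The market model `V̂` is upper semicontinuous (w.r.t. `L^∞` convergence of
essentially bounded strategies). -/
def USCModel {Ω : Type*} {mΩ : MeasurableSpace Ω} {T d : ℕ} (P : Measure Ω)
    (ℱ : Fin T → MeasurableSpace Ω)
    (Vh : (Ω → Fin T → Fin d → ℝ) → Ω → EReal) : Prop :=
  ∀ (ϑn : ℕ → Ω → Fin T → Fin d → ℝ) (ϑ : Ω → Fin T → Fin d → ℝ),
    (∀ n, AdaptedStrat ℱ (ϑn n)) → (∀ n, EssBdd P (ϑn n)) → AdaptedStrat ℱ ϑ →
    LinftyTendsto P ϑn ϑ →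
    ∀ᵐ ω ∂P, Filter.limsup (fun n => Vh (ϑn n) ω) atTop ≤ Vh ϑ ω

/-!
Cutting each `ϑ_t` off to zero outside some `A t ∈ ℱ t` leaves the value unchanged on `⋂ t, A t`,
by locality applied at one time after another. Egorov's theorem, applied for each `t` inside the
σ-algebra `ℱ t`, covers almost all of `Ω` by countably many sets on which `ϑⁿ_t → ϑ_t` uniformly.
Intersecting with `{‖ϑ_t‖ ≤ M}` makes the limit bounded, so the cut-off strategies converge in
`L^∞`, and upper semicontinuity gives the inequality on each of countably many pieces.
-/

section AlmostEverywhere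

variable {Ω E : Type*} {m mΩ : MeasurableSpace Ω} {μ : Measure Ω}

lemma ae_eventually_of_eventually_ae {ι : Type*} [Countable ι] {l : Filter ι} {p : ι → Ω → Prop}
    (h : ∀ᶠ i in l, ∀ᵐ ω ∂μ, p i ω) : ∀ᵐ ω ∂μ, ∀ᶠ i in l, p i ω := by
  have hae : ∀ᵐ ω ∂μ, ∀ i ∈ {i | ∀ᵐ ω ∂μ, p i ω}, p i ω :=
    (ae_ball_iff (Set.to_countable _)).2 fun _ hi => hi
  filter_upwards [hae] with ω hω using h.mono hω

variable [PseudoEMetricSpace E] {f : ℕ → Ω → E} {g : Ω → E}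

lemma ae_trim_tendsto (hm : m ≤ mΩ) (hf : ∀ n, StronglyMeasurable[m] (f n))
    (hg : StronglyMeasurable[m] g) (hfg : ∀ᵐ ω ∂μ, Tendsto (fun n => f n ω) atTop (𝓝 (g ω))) :
    ∀ᵐ ω ∂μ.trim hm, Tendsto (fun n => f n ω) atTop (𝓝 (g ω)) := by
  have hmeas : MeasurableSet[m] {ω | Tendsto (fun n => f n ω) atTop (𝓝 (g ω))} := by
    simp only [tendsto_iff_edist_tendsto_0]
    exact measurableSet_tendsto (𝓝 0) fun n => ((hf n).edist hg).measurable
  rwa [ae_iff, ← Set.compl_ofPred, trim_measurableSet_eq hm hmeas.compl]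

lemma exists_seq_tendstoUniformlyOn_of_ae_tendsto [SFinite μ] (hm : m ≤ mΩ)
    (hf : ∀ n, StronglyMeasurable[m] (f n)) (hg : StronglyMeasurable[m] g)
    (hfg : ∀ᵐ ω ∂μ, Tendsto (fun n => f n ω) atTop (𝓝 (g ω))) :
    ∃ B : ℕ → Set Ω, (∀ j, MeasurableSet[m] (B j)) ∧
      (∀ j, TendstoUniformlyOn f g atTop (B j)) ∧ ∀ᵐ ω ∂μ, ∃ j, ω ∈ B j := by
  rw [← ae_toFinite] at hfg ⊢
  have hegorov (j : ℕ) := tendstoUniformlyOn_of_ae_tendsto' hf hg (ae_trim_tendsto hm hf hg hfg)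
    (Nat.one_div_pos_of_nat (α := ℝ) (n := j))
  choose N hN hμN hunif using hegorov
  have hnull : μ.toFinite (⋂ j, N j) = 0 := by
    have hlim : Tendsto (fun j : ℕ => ENNReal.ofReal (1 / ((j : ℝ) + 1))) atTop (𝓝 0) := by
      simpa only [ENNReal.ofReal_zero] using
        ENNReal.tendsto_ofReal (tendsto_one_div_add_atTop_nhds_zero_nat (𝕜 := ℝ))
    refine le_antisymm (ge_of_tendsto' hlim fun j => ?_) zero_le
    calc μ.toFinite (⋂ j, N j) ≤ μ.toFinite (N j) := measure_mono (Set.iInter_subset N j)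
      _ = μ.toFinite.trim hm (N j) := (trim_measurableSet_eq hm (hN j)).symm
      _ ≤ ENNReal.ofReal (1 / ((j : ℝ) + 1)) := hμN j
  refine ⟨fun j => (N j)ᶜ, fun j => (hN j).compl, hunif, ?_⟩
  filter_upwards [measure_eq_zero_iff_ae_notMem.1 hnull] with ω hω
  simpa only [Set.mem_iInter, not_forall, Set.mem_compl_iff] using hω

end AlmostEverywhere

section Cutoff

variable {Ω ι E : Type*}

/-- The process `ϑ` with its component `ϑ_i` replaced by `ϑ_i · 1_{A i}` for every index `i`; it
turns convergence that is uniform on each `A i` into uniform convergence. -/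
def cutoff [Zero E] (A : ι → Set Ω) (ϑ : Ω → ι → E) : Ω → ι → E :=
  fun ω i => (A i).indicator (fun ω' => ϑ ω' i) ω

lemma cutoff_univ [Zero E] (ϑ : Ω → ι → E) : cutoff (fun _ => Set.univ) ϑ = ϑ := by
  funext ω i
  simp only [cutoff, Set.indicator_univ]

variable [Fintype ι] [SeminormedAddCommGroup E] {A : ι → Set Ω}

lemma norm_cutoff_le {ϑ : Ω → ι → E} {C : ℝ} (hC : 0 ≤ C) (h : ∀ i, ∀ ω ∈ A i, ‖ϑ ω i‖ ≤ C)
    (ω : Ω) : ‖cutoff A ϑ ω‖ ≤ C := by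
  refine (pi_norm_le_iff_of_nonneg hC).2 fun i => ?_
  by_cases hω : ω ∈ A i
  · simpa only [cutoff, Set.indicator_of_mem hω] using h i ω hω
  · simpa only [cutoff, Set.indicator_of_notMem hω, norm_zero] using hC

lemma norm_cutoff_sub_cutoff_le {ϑ η : Ω → ι → E} {C : ℝ} (hC : 0 ≤ C)
    (h : ∀ i, ∀ ω ∈ A i, ‖ϑ ω i - η ω i‖ ≤ C) (ω : Ω) : ‖cutoff A ϑ ω - cutoff A η ω‖ ≤ C := by
  have hsub : cutoff A ϑ ω - cutoff A η ω = cutoff A (ϑ - η) ω :=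
    funext fun i => (congrFun (Set.indicator_sub (A i) _ _) ω).symm
  rw [hsub]
  exact norm_cutoff_le hC h ω

end Cutoff

section Strategies

variable {Ω : Type*} {mΩ : MeasurableSpace Ω} {P : Measure Ω} {T d : ℕ}
  {ℱ : Fin T → MeasurableSpace Ω} {ϑn : ℕ → Ω → Fin T → Fin d → ℝ} {ϑ : Ω → Fin T → Fin d → ℝ}
  {A : Fin T → Set Ω}

lemma AdaptedStrat.cutoff (hϑ : AdaptedStrat ℱ ϑ) (hA : ∀ t, MeasurableSet[ℱ t] (A t)) :
    AdaptedStrat ℱ (cutoff A ϑ) :=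
  fun t => (hϑ t).indicator (hA t)

lemma essBdd_cutoff {M : ℝ} (h : ∀ t, ∀ ω ∈ A t, ‖ϑ ω t‖ ≤ M) : EssBdd P (cutoff A ϑ) :=
  ⟨max M 0, ae_of_all P <| norm_cutoff_le (le_max_right M 0) fun t ω hω =>
    (h t ω hω).trans (le_max_left M 0)⟩

lemma linftyTendsto_cutoff
    (h : ∀ t, TendstoUniformlyOn (fun n ω => ϑn n ω t) (fun ω => ϑ ω t) atTop (A t)) :
    LinftyTendsto P (fun n => cutoff A (ϑn n)) (cutoff A ϑ) := by
  intro ε hε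
  have hunif := eventually_all.2 fun t => Metric.tendstoUniformlyOn_iff.1 (h t) ε hε
  filter_upwards [hunif] with n hn
  refine ae_of_all P <| norm_cutoff_sub_cutoff_le hε.le fun t ω hω => ?_
  rw [← dist_eq_norm']
  exact (hn t ω hω).le

lemma LinftyTendsto.ae_tendsto (h : LinftyTendsto P ϑn ϑ) :
    ∀ᵐ ω ∂P, Tendsto (fun n => ϑn n ω) atTop (𝓝 (ϑ ω)) := by
  have hae : ∀ᵐ ω ∂P, ∀ j : ℕ, ∀ᶠ n in atTop, ‖ϑn n ω - ϑ ω‖ ≤ 1 / ((j : ℝ) + 1) :=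
    ae_all_iff.2 fun j => ae_eventually_of_eventually_ae (h _ Nat.one_div_pos_of_nat)
  filter_upwards [hae] with ω hω
  refine Metric.tendsto_nhds.2 fun ε hε => ?_
  obtain ⟨j, hj⟩ := exists_nat_one_div_lt hε
  filter_upwards [hω j] with n hn
  rw [dist_eq_norm]
  exact hn.trans_lt hj

lemma LinftyTendsto.eventually_essBdd (h : LinftyTendsto P ϑn ϑ) (hϑ : EssBdd P ϑ) :
    ∀ᶠ n in atTop, EssBdd P (ϑn n) := by
  obtain ⟨M, hM⟩ := hϑ
  filter_upwards [h 1 one_pos] with n hn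
  refine ⟨M + 1, ?_⟩
  filter_upwards [hM, hn] with ω hω hnω
  calc ‖ϑn n ω‖ ≤ ‖ϑ ω‖ + ‖ϑn n ω - ϑ ω‖ := norm_le_norm_add_norm_sub' _ _
    _ ≤ M + 1 := add_le_add hω hnω

lemma USCModel.ae_limsup_le_of_essBdd {Vh : (Ω → Fin T → Fin d → ℝ) → Ω → EReal}
    (hV : USCModel P ℱ Vh) (hϑn : ∀ n, AdaptedStrat ℱ (ϑn n)) (hϑ : AdaptedStrat ℱ ϑ)
    (hbdd : EssBdd P ϑ) (hlim : LinftyTendsto P ϑn ϑ) :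
    ∀ᵐ ω ∂P, limsup (fun n => Vh (ϑn n) ω) atTop ≤ Vh ϑ ω := by
  obtain ⟨n₀, hn₀⟩ := eventually_atTop.1 (hlim.eventually_essBdd hbdd)
  have htail := hV (fun n => ϑn (n + n₀)) ϑ (fun n => hϑn _)
    (fun n => hn₀ _ (Nat.le_add_left n₀ n)) hϑ
    fun ε hε => (tendsto_add_atTop_nat n₀).eventually (hlim ε hε)
  filter_upwards [htail] with ω hω
  rwa [← limsup_nat_add _ n₀]

end Strategies

/-- Locality (A2): on `A ∈ ℱ t`, a strategy has the same value as the strategy obtained from it by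
replacing `ϑ_t` by `ϑ_t · 1_A`. Values lie in an arbitrary type, since only their equality
matters. -/
def LocalModel {Ω β : Type*} {_ : MeasurableSpace Ω} {T d : ℕ} (P : Measure Ω)
    (ℱ : Fin T → MeasurableSpace Ω) (Vh : (Ω → Fin T → Fin d → ℝ) → Ω → β) : Prop :=
  ∀ (t : Fin T) (A : Set Ω), MeasurableSet[ℱ t] A → ∀ ϑ, AdaptedStrat ℱ ϑ →
    ∀ᵐ ω ∂P, ω ∈ A →
      Vh ϑ ω = Vh (fun ω' s => if s = t then A.indicator (fun ω'' => ϑ ω'' t) ω' else ϑ ω' s) ω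

namespace LocalModel

variable {Ω : Type*} {mΩ : MeasurableSpace Ω} {P : Measure Ω} {T d : ℕ}
  {ℱ : Fin T → MeasurableSpace Ω} {ϑn : ℕ → Ω → Fin T → Fin d → ℝ} {ϑ : Ω → Fin T → Fin d → ℝ}
  {A : Fin T → Set Ω}

lemma ae_eq_cutoff {β : Type*} {Vh : (Ω → Fin T → Fin d → ℝ) → Ω → β} (hloc : LocalModel P ℱ Vh)
    (hϑ : AdaptedStrat ℱ ϑ) (hA : ∀ t, MeasurableSet[ℱ t] (A t)) :
    ∀ᵐ ω ∂P, (∀ t, ω ∈ A t) → Vh ϑ ω = Vh (cutoff A ϑ) ω := by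
  let B (S : Finset (Fin T)) : Fin T → Set Ω := S.piecewise A fun _ => Set.univ
  have hB (S : Finset (Fin T)) (t : Fin T) : MeasurableSet[ℱ t] (B S t) :=
    S.piecewise_cases A _ (fun C => MeasurableSet[ℱ t] C) (hA t) MeasurableSet.univ
  have hcut (S : Finset (Fin T)) :
      ∀ᵐ ω ∂P, (∀ t, ω ∈ A t) → Vh ϑ ω = Vh (cutoff (B S) ϑ) ω := by
    induction S using Finset.induction_on with
    | empty => simp [B, cutoff_univ]
    | insert t S ht ih =>
      have hinsert : cutoff (B (insert t S)) ϑ = fun ω s =>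
          if s = t then (A t).indicator (fun ω' => cutoff (B S) ϑ ω' t) ω
          else cutoff (B S) ϑ ω s := by
        funext ω s
        by_cases hs : s = t
        · subst hs
          simp [B, cutoff, ht]
        · simp [B, cutoff, Finset.piecewise, hs]
      filter_upwards [ih, hloc t (A t) (hA t) _ (hϑ.cutoff (hB S))] with ω hS hstep hω
      rw [hS hω, hstep (hω t), hinsert]
  simpa only [B, Finset.piecewise_univ] using hcut Finset.univ

variable {Vh : (Ω → Fin T → Fin d → ℝ) → Ω → EReal}

lemma ae_limsup_le_of_tendstoUniformlyOn (hloc : LocalModel P ℱ Vh) (hV : USCModel P ℱ Vh)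
    (hϑn : ∀ n, AdaptedStrat ℱ (ϑn n)) (hϑ : AdaptedStrat ℱ ϑ)
    (hA : ∀ t, MeasurableSet[ℱ t] (A t)) {M : ℝ} (hbdd : ∀ t, ∀ ω ∈ A t, ‖ϑ ω t‖ ≤ M)
    (hunif : ∀ t, TendstoUniformlyOn (fun n ω => ϑn n ω t) (fun ω => ϑ ω t) atTop (A t)) :
    ∀ᵐ ω ∂P, (∀ t, ω ∈ A t) → limsup (fun n => Vh (ϑn n) ω) atTop ≤ Vh ϑ ω := by
  have husc := hV.ae_limsup_le_of_essBdd (fun n => (hϑn n).cutoff hA) (hϑ.cutoff hA)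
    (essBdd_cutoff hbdd) (linftyTendsto_cutoff hunif)
  filter_upwards [husc, hloc.ae_eq_cutoff hϑ hA,
    ae_all_iff.2 fun n => hloc.ae_eq_cutoff (hϑn n) hA] with ω hle hlim hseq hω
  simpa only [hlim hω, fun n => hseq n hω] using hle

lemma ae_limsup_le_of_ae_tendsto [SFinite P] (hloc : LocalModel P ℱ Vh) (hℱle : ∀ t, ℱ t ≤ mΩ)
    (hV : USCModel P ℱ Vh) (hϑn : ∀ n, AdaptedStrat ℱ (ϑn n)) (hϑ : AdaptedStrat ℱ ϑ)
    (hlim : ∀ᵐ ω ∂P, Tendsto (fun n => ϑn n ω) atTop (𝓝 (ϑ ω))) :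
    ∀ᵐ ω ∂P, limsup (fun n => Vh (ϑn n) ω) atTop ≤ Vh ϑ ω := by
  have hcover (t : Fin T) := exists_seq_tendstoUniformlyOn_of_ae_tendsto (hℱle t)
    (fun n => (hϑn n t).stronglyMeasurable) (hϑ t).stronglyMeasurable
    (hlim.mono fun ω hω => tendsto_pi_nhds.1 hω t)
  choose B hB hunif hcov using hcover
  have hpiece : ∀ᵐ ω ∂P, ∀ (c : Fin T → ℕ) (M : ℕ),
      (∀ t, ω ∈ B t (c t) ∩ {ω | ‖ϑ ω t‖ ≤ M}) →
        limsup (fun n => Vh (ϑn n) ω) atTop ≤ Vh ϑ ω :=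
    ae_all_iff.2 fun c => ae_all_iff.2 fun M => hloc.ae_limsup_le_of_tendstoUniformlyOn hV hϑn hϑ
      (fun t => (hB t (c t)).inter (hϑ t (measurableSet_le measurable_norm measurable_const)))
      (fun t ω hω => hω.2) (fun t => (hunif t (c t)).mono Set.inter_subset_left)
  filter_upwards [hpiece, ae_all_iff.2 hcov] with ω hω hωB
  choose c hc using hωB
  obtain ⟨M, hM⟩ := exists_nat_ge ‖ϑ ω‖
  exact hω c M fun t => ⟨hc t, (norm_le_pi_norm (ϑ ω) t).trans hM⟩

end LocalModel

theorem stmt4_general {Ω : Type*} {mΩ : MeasurableSpace Ω} {P : Measure Ω} [SFinite P] {T d : ℕ}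
    {ℱ : Fin T → MeasurableSpace Ω} (hℱle : ∀ t, ℱ t ≤ mΩ)
    {Vh : (Ω → Fin T → Fin d → ℝ) → Ω → EReal} (hloc : LocalModel P ℱ Vh) :
    USCModel P ℱ Vh ↔
      ∀ (ϑn : ℕ → Ω → Fin T → Fin d → ℝ) (ϑ : Ω → Fin T → Fin d → ℝ),
        (∀ n, AdaptedStrat ℱ (ϑn n)) → AdaptedStrat ℱ ϑ →
        (∀ᵐ ω ∂P, Tendsto (fun n => ϑn n ω) atTop (𝓝 (ϑ ω))) →
        ∀ᵐ ω ∂P, limsup (fun n => Vh (ϑn n) ω) atTop ≤ Vh ϑ ω :=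
  ⟨fun hV _ _ => hloc.ae_limsup_le_of_ae_tendsto hℱle hV,
    fun h ϑn ϑ hϑn _ hϑ hlim => h ϑn ϑ hϑn hϑ hlim.ae_tendsto⟩

/-- a market model `V̂` is upper semicontinuous (w.r.t. `L^∞` convergence
of bounded strategies) if and only if for every sequence of adapted strategies `ϑⁿ`
converging almost surely to an adapted strategy `ϑ` one has
`limsup_n V̂(ϑⁿ) ≤ V̂(ϑ)` almost surely. -/
theorem stmt4 {Ω : Type*} {mΩ : MeasurableSpace Ω} (P : Measure Ω) [IsProbabilityMeasure P]
    (T d : ℕ) (hT : 1 ≤ T) (hd : 1 ≤ d)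
    (ℱ : Fin T → MeasurableSpace Ω) (hℱmono : Monotone ℱ) (hℱle : ∀ t, ℱ t ≤ mΩ)
    -- the market model V̂
    (Vh : (Ω → Fin T → Fin d → ℝ) → Ω → EReal)
    (hVhmeas : ∀ ϑ, AdaptedStrat ℱ ϑ → Measurable (Vh ϑ))
    (hVhnotTop : ∀ ϑ, AdaptedStrat ℱ ϑ → ∀ᵐ ω ∂P, Vh ϑ ω ≠ ⊤)
    -- (A1) normalization
    (hA1 : ∀ᵐ ω ∂P, Vh (fun _ _ _ => 0) ω = 0)
    -- (A2) locality
    (hA2 : ∀ (t : Fin T) (A : Set Ω), MeasurableSet[ℱ t] A →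
      ∀ ϑ, AdaptedStrat ℱ ϑ →
        ∀ᵐ ω ∂P, ω ∈ A →
          Vh ϑ ω = Vh (fun ω' s => if s = t then A.indicator (fun ω'' => ϑ ω'' t) ω'
            else ϑ ω' s) ω) :
    -- the equivalence
    USCModel P ℱ Vh ↔
      (∀ (ϑn : ℕ → Ω → Fin T → Fin d → ℝ) (ϑ : Ω → Fin T → Fin d → ℝ),
        (∀ n, AdaptedStrat ℱ (ϑn n)) → AdaptedStrat ℱ ϑ →
        (∀ᵐ ω ∂P, Tendsto (fun n => ϑn n ω) atTop (nhds (ϑ ω))) →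
        ∀ᵐ ω ∂P, Filter.limsup (fun n => Vh (ϑn n) ω) atTop ≤ Vh ϑ ω) := by
  exact stmt4_general hℱle hA2

end
end

section
/- Let f̂ : L^0(𝓕;ℝ^d) → L^0(𝓕;ℝ) be a one-step market model (i.e. f̂(0) = 0 a.s. and f̂ is local: f̂(ϑ)·1_A = f̂(ϑ·1_A)·1_A a.s. for all A ∈ 𝓕). If f̂ is sequentially continuous, i.e. ϑ^k → ϑ almost surely implies f̂(ϑ^k) → f̂(ϑ) almost surely, then f̂ can be represented by a Carathéodory map: there is f : Ω × ℝ^d → ℝ such that x ↦ f(ω,x) is continuous for a.e. ω, ω ↦ f(ω,x) is 𝓕-measurable for every x, and f̂(ϑ)(ω) = f(ω,ϑ(ω)) a.s. for every ϑ ∈ L^0(𝓕;ℝ^d). -/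
open MeasureTheory Filter Topology

noncomputable section

/-!
Write `g ω a` for the value at `ω` of `T` applied to the constant `a`. Locality forces
`T ϑ ω = g ω (ϑ ω)` almost surely for countably valued `ϑ`, so `f ω` has to be the continuous
extension of `g ω` from a countable dense set. It exists because `g ω` is almost surely uniformly
continuous on countable relatively compact sets `C`: otherwise one selects, measurably in `ω`, pairs
of points of `C` at distance tending to zero whose images under `g ω` are at distance at least `ε`.
A measurable random subsequence of these pairs converges to a random variable `L`, and sequential
continuity of `T` at `L` is violated. Approximating a general `ϑ` by simple functions with values in
the dense set then gives `T ϑ ω = f ω (ϑ ω)` almost surely.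
-/

section MeasurableSelection

variable {Ω : Type*} [MeasurableSpace Ω]

lemma exists_measurable_selection {ι : Type*} [Countable ι] [Nonempty ι] [MeasurableSpace ι]
    {S : ι → Set Ω} (hS : ∀ i, MeasurableSet (S i)) :
    ∃ c : Ω → ι, Measurable c ∧ ∀ ω, (∃ i, ω ∈ S i) → ω ∈ S (c ω) := by
  classical
  obtain ⟨e, he⟩ := exists_surjective_nat ι
  have hex : ∀ ω, ∃ n, (∃ i, ω ∈ S i) → ω ∈ S (e n) := fun ω => by
    by_cases h : ∃ i, ω ∈ S i
    · obtain ⟨i, hi⟩ := h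
      obtain ⟨n, rfl⟩ := he i
      exact ⟨n, fun _ => hi⟩
    · exact ⟨0, fun h' => absurd h' h⟩
  have hmeas : ∀ n, MeasurableSet {ω | (∃ i, ω ∈ S i) → ω ∈ S (e n)} := fun n =>
    measurableSet_setOfPred.2 ((Measurable.exists fun i => measurable_mem.2 (hS i)).imp
      (measurable_mem.2 (hS (e n))))
  exact ⟨fun ω => e (Nat.find (hex ω)), measurable_from_nat.comp (measurable_find hex hmeas),
    fun ω => Nat.find_spec (hex ω)⟩

lemma measurable_apply_random_index {ι β : Type*} [Countable ι] [MeasurableSpace ι]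
    [MeasurableSingletonClass ι] [MeasurableSpace β] {u : ι → Ω → β} {m : Ω → ι}
    (hu : ∀ i, Measurable (u i)) (hm : Measurable m) : Measurable fun ω => u (m ω) ω :=
  (measurable_from_prod_countable_right (f := fun p : ι × Ω => u p.1 p.2) hu).comp
    (hm.prodMk measurable_id)

end MeasurableSelection

section RandomSubsequence

variable {Ω X : Type*} [MeasurableSpace Ω] [PseudoMetricSpace X]

/-- A random infinite set of natural numbers, encoded by the events `A n` that it contains `n`.
Shrinking such sets successively produces measurable random subsequences. -/
def IsRandomInfinite (A : ℕ → Set Ω) : Prop :=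
  (∀ n, MeasurableSet (A n)) ∧ ∀ ω, ∃ᶠ n in atTop, ω ∈ A n

lemma exists_frequently_dist_lt_of_totallyBounded {ι : Type*} {l : Filter ι} {x : ι → X}
    (hx : TotallyBounded (Set.range x)) {p : ι → Prop} (hp : ∃ᶠ i in l, p i) {ε : ℝ} (hε : 0 < ε) :
    ∃ j, ∃ᶠ i in l, p i ∧ dist (x i) (x j) < ε := by
  obtain ⟨t, ht, htfin, hcover⟩ := Metric.finite_approx_of_totallyBounded hx ε hε
  by_contra hfar
  rw [not_exists] at hfar
  have hfar' : ∀ᶠ i in l, ∀ y ∈ t, ¬(p i ∧ dist (x i) y < ε) :=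
    (eventually_all_finite htfin).2 fun y hy => by
      obtain ⟨j, rfl⟩ := ht hy
      exact not_frequently.1 (hfar j)
  obtain ⟨i, hpi, hi⟩ := (hp.and_eventually hfar').exists
  obtain ⟨y, hy, hiy⟩ := Set.mem_iUnion₂.1 (hcover ⟨i, rfl⟩)
  exact hi y hy ⟨hpi, hiy⟩

variable [SecondCountableTopology X] [MeasurableSpace X] [OpensMeasurableSpace X]
  {x : ℕ → Ω → X}

lemma IsRandomInfinite.exists_subset_dist_lt {A : ℕ → Set Ω} (hA : IsRandomInfinite A)
    (hx : ∀ n, Measurable (x n)) (htb : ∀ ω, TotallyBounded (Set.range fun n => x n ω))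
    {ε : ℝ} (hε : 0 < ε) :
    ∃ B : ℕ → Set Ω, IsRandomInfinite B ∧ (∀ n, B n ⊆ A n) ∧
      ∀ ω m n, ω ∈ B m → ω ∈ B n → dist (x m ω) (x n ω) < ε := by
  have hnear : ∀ j n, MeasurableSet (A n ∩ {ω | dist (x n ω) (x j ω) < ε / 2}) := fun j n =>
    (hA.1 n).inter (measurableSet_lt ((hx n).dist (hx j)) measurable_const)
  obtain ⟨j, hj, hj'⟩ := exists_measurable_selection fun j =>
    MeasurableSet.measurableSet_limsup (hnear j)
  simp only [mem_limsup_iff_frequently_mem] at hj'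
  have hxj : Measurable fun ω => x (j ω) ω := measurable_apply_random_index hx hj
  refine ⟨fun n => A n ∩ {ω | dist (x n ω) (x (j ω) ω) < ε / 2}, ⟨fun n => ?_, fun ω => ?_⟩,
    fun n => Set.inter_subset_left, fun ω m n hm hn => ?_⟩
  · exact (hA.1 n).inter (measurableSet_lt ((hx n).dist hxj) measurable_const)
  · exact hj' ω (exists_frequently_dist_lt_of_totallyBounded (htb ω) (hA.2 ω) (half_pos hε))
  · calc dist (x m ω) (x n ω) ≤ dist (x m ω) (x (j ω) ω) + dist (x n ω) (x (j ω) ω) :=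
          dist_triangle_right _ _ _
      _ < ε / 2 + ε / 2 := add_lt_add hm.2 hn.2
      _ = ε := add_halves ε

theorem exists_measurable_subseq_cauchySeq (hx : ∀ n, Measurable (x n))
    (htb : ∀ ω, TotallyBounded (Set.range fun n => x n ω)) :
    ∃ m : ℕ → Ω → ℕ, (∀ k, Measurable (m k)) ∧ (∀ k ω, k ≤ m k ω) ∧
      ∀ ω, CauchySeq fun k => x (m k ω) ω := by
  classical
  choose! B hB hBA hdist using fun (k : ℕ) (A : ℕ → Set Ω) (hA : IsRandomInfinite A) =>
    hA.exists_subset_dist_lt hx htb (Nat.one_div_pos_of_nat (n := k))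
  let A : ℕ → ℕ → Set Ω := fun k => Nat.rec (fun _ => Set.univ) B k
  have hA : ∀ k, IsRandomInfinite (A k) := fun k => by
    induction k with
    | zero => exact ⟨fun _ => .univ, fun _ => .of_forall fun _ => Set.mem_univ _⟩
    | succ k ih => exact hB k (A k) ih
  have hanti : Antitone A := antitone_nat_of_succ_le fun k => hBA k (A k) (hA k)
  have hex : ∀ k ω, ∃ n, k ≤ n ∧ ω ∈ A (k + 1) n := fun k ω =>
    (frequently_atTop.1 ((hA (k + 1)).2 ω) k)
  have hm : ∀ k ω, ω ∈ A (k + 1) (Nat.find (hex k ω)) := fun k ω => (Nat.find_spec (hex k ω)).2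
  refine ⟨fun k ω => Nat.find (hex k ω), fun k => measurable_find (hex k) fun n => ?_,
    fun k ω => (Nat.find_spec (hex k ω)).1, fun ω => ?_⟩
  · exact (MeasurableSet.const _).inter ((hA (k + 1)).1 n)
  · refine cauchySeq_of_le_tendsto_0 (fun k : ℕ => 1 / ((k : ℝ) + 1)) (fun i j k hi hj => ?_)
      tendsto_one_div_add_atTop_nhds_zero_nat
    exact (hdist k (A k) (hA k) ω _ _ (hanti (Nat.succ_le_succ hi) _ (hm i ω))
      (hanti (Nat.succ_le_succ hj) _ (hm j ω))).le

end RandomSubsequence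

section DenseExtension

lemma exists_tendsto_of_uniformContinuousOn {E F : Type*} [UniformSpace E] [UniformSpace F]
    [CompleteSpace F] {D K : Set E} {a : E} (hD : Dense D) (hK : K ∈ 𝓝 a) {g : E → F}
    (hg : UniformContinuousOn g (D ∩ K)) :
    ∃ b, Tendsto (fun z : D => g z) (comap (↑) (𝓝 a)) (𝓝 b) := by
  have hDK : D ∩ K ∈ 𝓝[D] a := Filter.inter_mem self_mem_nhdsWithin (mem_nhdsWithin_of_mem_nhds hK)
  have hcauchy : 𝓝[D] a ×ˢ 𝓝[D] a ≤ uniformity E :=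
    (Filter.prod_mono inf_le_left inf_le_left).trans
      (nhds_prod_eq.symm.trans_le (nhds_le_uniformity a))
  have := mem_closure_iff_nhdsWithin_neBot.1 (hD a)
  have hg' : Cauchy (map g (𝓝[D] a)) := ⟨inferInstance, by
    rw [prod_map_map_eq]
    exact hg.mono_left (le_inf hcauchy (le_principal_iff.2 (prod_mem_prod hDK hDK)))⟩
  obtain ⟨b, hb⟩ := CompleteSpace.complete hg'
  exact ⟨b, Tendsto.comp (g := g) hb (tendsto_nhdsWithin_iff.2
    ⟨tendsto_comap, .of_forall Subtype.coe_prop⟩)⟩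

lemma measurable_dense_extend {Ω E F : Type*} [MeasurableSpace Ω] [TopologicalSpace E]
    [FirstCountableTopology E] [TopologicalSpace F] [PolishSpace F] [MeasurableSpace F]
    [BorelSpace F] {D : Set E} [Countable D] (hD : Dense D) {g : Ω → D → F}
    (hg : ∀ z, Measurable fun ω => g ω z) (a : E) : Measurable fun ω => hD.extend (g ω) a := by
  rcases isEmpty_or_nonempty Ω with _ | ⟨⟨ω₀⟩⟩
  · exact measurable_of_empty _
  · have : Nonempty F := ⟨g ω₀ (hD.isDenseInducing_val.dense.some a)⟩
    exact (StronglyMeasurable.limUnder fun z => (hg z).stronglyMeasurable).measurable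

end DenseExtension

section RandomFunction

variable {Ω E F : Type*} [MeasurableSpace Ω] [PseudoMetricSpace E] [MeasurableSpace E]
  [PseudoMetricSpace F] [MeasurableSpace F]

-- Contrapositively, `(y, z)` violates the bound `ε` wherever some `δ`-close pair of `C` does.
lemma exists_measurable_pair_forall_dist_lt [SecondCountableTopology F] [OpensMeasurableSpace F]
    {C : Set E} (hC : C.Countable) (hCne : C.Nonempty) {g : Ω → E → F}
    (hg : ∀ z, Measurable fun ω => g ω z) {δ : ℝ} (hδ : 0 < δ) (ε : ℝ) :
    ∃ y z : Ω → E, Measurable y ∧ Measurable z ∧ (∀ ω, y ω ∈ C) ∧ (∀ ω, z ω ∈ C) ∧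
      (∀ ω, dist (y ω) (z ω) < δ) ∧
      ∀ ω, dist (g ω (y ω)) (g ω (z ω)) < ε →
        ∀ a ∈ C, ∀ b ∈ C, dist a b < δ → dist (g ω a) (g ω b) < ε := by
  let close : Set (E × E) := {p | p ∈ C ×ˢ C ∧ dist p.1 p.2 < δ}
  obtain ⟨z₀, hz₀⟩ := hCne
  have : Nonempty close := ⟨⟨(z₀, z₀), ⟨hz₀, hz₀⟩, by simpa only [dist_self]⟩⟩
  have : Countable close := ((hC.prod hC).mono fun p hp => hp.1).to_subtype
  obtain ⟨c, hc, hsel⟩ := exists_measurable_selection (ι := close)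
    (S := fun p => {ω | ε ≤ dist (g ω p.1.1) (g ω p.1.2)}) fun p =>
      measurableSet_le measurable_const ((hg _).dist (hg _))
  have hc' : Measurable fun ω => (c ω : E × E) := measurable_subtype_coe.comp hc
  refine ⟨fun ω => (c ω).1.1, fun ω => (c ω).1.2, hc'.fst, hc'.snd, fun ω => (c ω).2.1.1,
    fun ω => (c ω).2.1.2, fun ω => (c ω).2.2, fun ω hω a ha b hb hab => ?_⟩
  by_contra! hab'
  exact hω.not_ge (hsel ω ⟨⟨(a, b), ⟨ha, hb⟩, hab⟩, hab'⟩)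

end RandomFunction

section LocalOperator

variable {Ω E F : Type*} [MeasurableSpace Ω] {μ : Measure Ω} [MeasurableSpace E]
  {T : (Ω → E) → Ω → F}

/-- Locality of an operator on random variables, phrased without a zero element of `E`: the values
of `T ϑ` on an event depend, up to null sets, only on the values of `ϑ` on that event. -/
def IsLocalOperator (μ : Measure Ω) (T : (Ω → E) → Ω → F) : Prop :=
  ∀ ⦃A : Set Ω⦄, MeasurableSet A → ∀ ⦃ϑ η : Ω → E⦄, Measurable ϑ → Measurable η →
    Set.EqOn ϑ η A → ∀ᵐ ω ∂μ, ω ∈ A → T ϑ ω = T η ω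

/-- Sequential continuity of an operator on random variables with respect to almost sure
convergence. -/
def AESeqContinuous [TopologicalSpace E] [TopologicalSpace F] (μ : Measure Ω)
    (T : (Ω → E) → Ω → F) : Prop :=
  ∀ (ϑk : ℕ → Ω → E) (ϑ : Ω → E), (∀ k, Measurable (ϑk k)) → Measurable ϑ →
    (∀ᵐ ω ∂μ, Tendsto (fun k => ϑk k ω) atTop (𝓝 (ϑ ω))) →
    ∀ᵐ ω ∂μ, Tendsto (fun k => T (ϑk k) ω) atTop (𝓝 (T ϑ ω))

lemma IsLocalOperator.of_indicator [Zero E]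
    (h : ∀ A : Set Ω, MeasurableSet A → ∀ ϑ : Ω → E, Measurable ϑ →
      ∀ᵐ ω ∂μ, ω ∈ A → T ϑ ω = T (A.indicator ϑ) ω) :
    IsLocalOperator μ T := by
  intro A hA ϑ η hϑ hη hϑη
  filter_upwards [h A hA ϑ hϑ, h A hA η hη] with ω hω hω' hωA
  rw [hω hωA, hω' hωA, Set.indicator_congr hϑη]

lemma IsLocalOperator.ae_eq_apply_const [MeasurableSingletonClass E] (hT : IsLocalOperator μ T)
    {ϑ : Ω → E} (hϑ : Measurable ϑ) (hrange : (Set.range ϑ).Countable) :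
    ∀ᵐ ω ∂μ, T ϑ ω = T (fun _ => ϑ ω) ω := by
  have hfiber : ∀ z ∈ Set.range ϑ, ∀ᵐ ω ∂μ, ω ∈ ϑ ⁻¹' {z} → T ϑ ω = T (fun _ => z) ω := fun z _ =>
    hT (hϑ (measurableSet_singleton z)) hϑ measurable_const fun _ hω => hω
  filter_upwards [(ae_ball_iff hrange).2 hfiber] with ω hω
  exact hω (ϑ ω) ⟨ω, rfl⟩ rfl

lemma IsLocalOperator.ae_tendsto_apply_const [TopologicalSpace E] [MeasurableSingletonClass E]
    [TopologicalSpace F] (hloc : IsLocalOperator μ T) (hcont : AESeqContinuous μ T)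
    {ϑk : ℕ → Ω → E} {ϑ : Ω → E} (hϑk : ∀ k, Measurable (ϑk k)) (hϑ : Measurable ϑ)
    (hrange : ∀ k, (Set.range (ϑk k)).Countable)
    (hlim : ∀ᵐ ω ∂μ, Tendsto (fun k => ϑk k ω) atTop (𝓝 (ϑ ω))) :
    ∀ᵐ ω ∂μ, Tendsto (fun k => T (fun _ => ϑk k ω) ω) atTop (𝓝 (T ϑ ω)) := by
  filter_upwards [hcont ϑk ϑ hϑk hϑ hlim,
    ae_all_iff.2 fun k => hloc.ae_eq_apply_const (hϑk k) (hrange k)] with ω htend heq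
  simpa only [heq] using htend

variable [MetricSpace E] [SecondCountableTopology E] [BorelSpace E]

lemma IsLocalOperator.ae_exists_modulus_const [MeasurableSpace F] [PseudoMetricSpace F]
    [SecondCountableTopology F] [OpensMeasurableSpace F] (hloc : IsLocalOperator μ T)
    (hmeas : ∀ a, Measurable (T fun _ => a)) (hcont : AESeqContinuous μ T) {C K : Set E}
    (hC : C.Countable) (hCne : C.Nonempty) (hK : IsCompact K) (hCK : C ⊆ K) {ε : ℝ} (hε : 0 < ε) :
    ∀ᵐ ω ∂μ, ∃ δ > 0, ∀ a ∈ C, ∀ b ∈ C, dist a b < δ →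
      dist (T (fun _ => a) ω) (T (fun _ => b) ω) < ε := by
  choose y z hy hz hyC hzC hyz hmax using fun n : ℕ => exists_measurable_pair_forall_dist_lt hC hCne
    (g := fun ω a => T (fun _ => a) ω) hmeas
    (Nat.one_div_pos_of_nat (n := n)) ε
  obtain ⟨m, hm, hkm, hcauchy⟩ := exists_measurable_subseq_cauchySeq hy fun ω =>
    hK.totallyBounded.subset (Set.range_subset_iff.2 fun n => hCK (hyC n ω))
  choose L _ hyL using fun ω =>
    cauchySeq_tendsto_of_isComplete hK.isComplete (fun k => hCK (hyC (m k ω) ω)) (hcauchy ω)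
  have hzL : ∀ ω, Tendsto (fun k => z (m k ω) ω) atTop (𝓝 (L ω)) := fun ω =>
    (hyL ω).congr_dist <| squeeze_zero (fun _ => dist_nonneg)
      (fun k => (hyz (m k ω) ω).le.trans (Nat.one_div_le_one_div (hkm k ω)))
      tendsto_one_div_add_atTop_nhds_zero_nat
  have hym : ∀ k, Measurable fun ω => y (m k ω) ω := fun k =>
    measurable_apply_random_index hy (hm k)
  have hzm : ∀ k, Measurable fun ω => z (m k ω) ω := fun k =>
    measurable_apply_random_index hz (hm k)
  have hLm : Measurable L := measurable_of_tendsto_metrizable hym (tendsto_pi_nhds.2 hyL)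
  filter_upwards [
    hloc.ae_tendsto_apply_const hcont hym hLm
      (fun k => hC.mono (Set.range_subset_iff.2 fun ω => hyC _ ω)) (ae_of_all _ hyL),
    hloc.ae_tendsto_apply_const hcont hzm hLm
      (fun k => hC.mono (Set.range_subset_iff.2 fun ω => hzC _ ω)) (ae_of_all _ hzL)] with ω hTy hTz
  have hdist := hTy.dist hTz
  rw [dist_self] at hdist
  obtain ⟨k, hk⟩ := (hdist.eventually_lt_const hε).exists
  exact ⟨1 / ((m k ω : ℝ) + 1), Nat.one_div_pos_of_nat, hmax (m k ω) ω hk⟩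

theorem IsLocalOperator.ae_uniformContinuousOn_const [MeasurableSpace F] [PseudoMetricSpace F]
    [SecondCountableTopology F] [OpensMeasurableSpace F] (hloc : IsLocalOperator μ T)
    (hmeas : ∀ a, Measurable (T fun _ => a)) (hcont : AESeqContinuous μ T) {C K : Set E}
    (hC : C.Countable) (hK : IsCompact K) (hCK : C ⊆ K) :
    ∀ᵐ ω ∂μ, UniformContinuousOn (fun a => T (fun _ => a) ω) C := by
  rcases C.eq_empty_or_nonempty with rfl | hCne
  · simp [UniformContinuousOn]
  · have hmod := ae_all_iff.2 fun N : ℕ =>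
      hloc.ae_exists_modulus_const hmeas hcont hC hCne hK hCK (Nat.one_div_pos_of_nat (n := N))
    filter_upwards [hmod] with ω hω
    refine Metric.uniformContinuousOn_iff.2 fun ε hε => ?_
    obtain ⟨N, hN⟩ := exists_nat_one_div_lt hε
    obtain ⟨δ, hδ, hclose⟩ := hω N
    exact ⟨δ, hδ, fun a ha b hb hab => (hclose a ha b hb hab).trans hN⟩

variable {D : Set E}

lemma IsLocalOperator.ae_exists_tendsto_const [WeaklyLocallyCompactSpace E] [MeasurableSpace F]
    [PseudoMetricSpace F] [CompleteSpace F] [SecondCountableTopology F] [OpensMeasurableSpace F]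
    (hloc : IsLocalOperator μ T) (hmeas : ∀ a, Measurable (T fun _ => a))
    (hcont : AESeqContinuous μ T) (hDc : D.Countable) (hD : Dense D) :
    ∀ᵐ ω ∂μ, ∀ a : E, ∃ b, Tendsto (fun z : D => T (fun _ => z) ω) (comap (↑) (𝓝 a)) (𝓝 b) := by
  let K : CompactExhaustion E := default
  have hunif := ae_all_iff.2 fun n => hloc.ae_uniformContinuousOn_const hmeas hcont
    (hDc.mono Set.inter_subset_left) (K.isCompact n) (Set.inter_subset_right (s := D))
  filter_upwards [hunif] with ω hω a
  obtain ⟨n, hn⟩ := K.exists_mem_nhds a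
  exact exists_tendsto_of_uniformContinuousOn hD hn (hω n)

lemma IsLocalOperator.ae_eq_dense_extend [Nonempty E] [TopologicalSpace F] [T2Space F]
    (hloc : IsLocalOperator μ T) (hcont : AESeqContinuous μ T) (hD : Dense D)
    (hlim : ∀ᵐ ω ∂μ, ∀ a : E, ∃ b,
      Tendsto (fun z : D => T (fun _ => z) ω) (comap (↑) (𝓝 a)) (𝓝 b))
    {ϑ : Ω → E} (hϑ : Measurable ϑ) :
    ∀ᵐ ω ∂μ, T ϑ ω = hD.extend (fun z : D => T (fun _ => z) ω) (ϑ ω) := by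
  obtain ⟨z₀, hz₀⟩ := hD.nonempty
  let ϑk : ℕ → SimpleFunc Ω E := SimpleFunc.approxOn ϑ hϑ D z₀ hz₀
  have hϑkD : ∀ k ω, ϑk k ω ∈ D := SimpleFunc.approxOn_mem hϑ hz₀
  have hϑk : ∀ ω, Tendsto (fun k => ϑk k ω) atTop (𝓝 (ϑ ω)) := fun ω =>
    SimpleFunc.tendsto_approxOn hϑ hz₀ (hD (ϑ ω))
  filter_upwards [hlim, hloc.ae_tendsto_apply_const hcont (fun k => (ϑk k).measurable) hϑ
    (fun k => (ϑk k).finite_range.countable) (ae_of_all _ hϑk)] with ω hω htend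
  obtain ⟨b, hb⟩ := hω (ϑ ω)
  have hϑkcomap : Tendsto (fun k => (⟨ϑk k ω, hϑkD k ω⟩ : D)) atTop (comap (↑) (𝓝 (ϑ ω))) :=
    tendsto_comap_iff.2 (hϑk ω)
  rw [hD.extend_eq_of_tendsto hb]
  exact tendsto_nhds_unique htend (hb.comp hϑkcomap)

end LocalOperator

theorem stmt5_general {Ω E F : Type*} {mΩ : MeasurableSpace Ω} (μ : Measure Ω)
    [TopologicalSpace E] [TopologicalSpace.MetrizableSpace E] [WeaklyLocallyCompactSpace E]
    [SecondCountableTopology E] [Nonempty E] [MeasurableSpace E] [BorelSpace E]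
    [TopologicalSpace F] [PolishSpace F] [MeasurableSpace F] [BorelSpace F]
    (T : (Ω → E) → Ω → F) (hmeas : ∀ a, Measurable (T fun _ => a))
    (hloc : IsLocalOperator μ T) (hcont : AESeqContinuous μ T) :
    ∃ f : Ω → E → F,
      (∀ᵐ ω ∂μ, Continuous (f ω)) ∧
      (∀ x, Measurable fun ω => f ω x) ∧
      (∀ ϑ, Measurable ϑ → ∀ᵐ ω ∂μ, T ϑ ω = f ω (ϑ ω)) := by
  let := TopologicalSpace.metrizableSpaceMetric E
  let := TopologicalSpace.upgradeIsCompletelyMetrizable F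
  obtain ⟨D, hDc, hD⟩ := TopologicalSpace.exists_countable_dense E
  have : Countable D := hDc.to_subtype
  have hlim := hloc.ae_exists_tendsto_const hmeas hcont hDc hD
  refine ⟨fun ω => hD.extend fun z : D => T (fun _ => z) ω, ?_, ?_, ?_⟩
  · filter_upwards [hlim] with ω hω using hD.continuous_extend hω
  · exact measurable_dense_extend hD fun z => hmeas z
  · exact fun ϑ hϑ => hloc.ae_eq_dense_extend hcont hD hlim hϑ

/-- a sequentially continuous one-step market model
`f̂ : L^0(𝓕;ℝ^d) → L^0(𝓕;ℝ)` can be represented by a Carathéodory map. -/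
theorem stmt5 {Ω : Type*} {mΩ : MeasurableSpace Ω} (P : Measure Ω) [IsProbabilityMeasure P]
    (d : ℕ) (hd : 1 ≤ d)
    -- the one-step market model f̂
    (fh : (Ω → Fin d → ℝ) → Ω → ℝ)
    (hfmeas : ∀ ϑ : Ω → Fin d → ℝ, Measurable ϑ → Measurable (fh ϑ))
    -- normalization: f̂(0) = 0 a.s.
    (hA1 : ∀ᵐ ω ∂P, fh (fun _ _ => 0) ω = 0)
    -- locality: f̂(ϑ)·1_A = f̂(ϑ·1_A)·1_A a.s. for all A ∈ 𝓕
    (hA2 : ∀ (A : Set Ω), MeasurableSet A → ∀ ϑ : Ω → Fin d → ℝ, Measurable ϑ →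
      ∀ᵐ ω ∂P, ω ∈ A → fh ϑ ω = fh (A.indicator ϑ) ω)
    -- sequential continuity
    (hcont : ∀ (ϑk : ℕ → Ω → Fin d → ℝ) (ϑ : Ω → Fin d → ℝ),
      (∀ k, Measurable (ϑk k)) → Measurable ϑ →
      (∀ᵐ ω ∂P, Tendsto (fun k => ϑk k ω) atTop (nhds (ϑ ω))) →
      ∀ᵐ ω ∂P, Tendsto (fun k => fh (ϑk k) ω) atTop (nhds (fh ϑ ω))) :
    -- conclusion: representation by a Carathéodory map
    ∃ f : Ω → (Fin d → ℝ) → ℝ,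
      (∀ᵐ ω ∂P, Continuous (f ω)) ∧
      (∀ x : Fin d → ℝ, Measurable fun ω => f ω x) ∧
      (∀ ϑ : Ω → Fin d → ℝ, Measurable ϑ → ∀ᵐ ω ∂P, fh ϑ ω = f ω (ϑ ω)) :=
  stmt5_general P fh (fun _ => hfmeas _ measurable_const) (.of_indicator hA2) hcont

end
end

section
/- Let V : Ω × ℝ^{dT} → ℝ ∪ {−∞} be a normal integrand market model satisfying the no-arbitrage condition NA. Then the market model is viable: for every finite random variable f ∈ L^0(𝓕;ℝ), the set 𝒞_f = { g ∈ L^0(𝓕;ℝ) : ∃ϑ ∈ 𝒜 with V(·,ϑ(·)) ≥ g ≥ f a.s. } of superhedgeable claims dominating f is bounded in probability. -/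
open MeasureTheory Filter Topology
open scoped ENNReal

noncomputable section

/-- The hypographical correspondence of `V` is closed valued and measurable. -/
def HypoClosedMeas {Ω : Type*} {mΩ : MeasurableSpace Ω} {T d : ℕ}
    (V : Ω → (Fin T → Fin d → ℝ) → EReal) : Prop :=
  (∀ ω, IsClosed {xb : (Fin T → Fin d → ℝ) × ℝ | (xb.2 : EReal) ≤ V ω xb.1}) ∧
  (∀ (c : (Fin T → Fin d → ℝ) × ℝ) (s : ℝ),
    MeasurableSet {ω | (Metric.ball c s ∩
      {xb : (Fin T → Fin d → ℝ) × ℝ | (xb.2 : EReal) ≤ V ω xb.1}).Nonempty})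

/-- The recession market model
`V^∞(ω,z) = lim_{λ→∞} sup { (1/δ)·V(ω,δx) : δ > λ, |x−z| < 1/λ }`; since the inner
supremum is antitone in `λ`, the limit equals the infimum over `λ > 0`. -/
def recessionModel {Ω : Type*} {T d : ℕ} (V : Ω → (Fin T → Fin d → ℝ) → EReal)
    (ω : Ω) (z : Fin T → Fin d → ℝ) : EReal :=
  ⨅ l : {l : ℝ // 0 < l}, ⨆ δ : {δ : ℝ // l.1 < δ},
    ⨆ x : {x : Fin T → Fin d → ℝ // ‖x - z‖ < 1 / l.1},
      (((δ.1)⁻¹ : ℝ) : EReal) * V ω (δ.1 • x.1)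

/-- The no-arbitrage condition NA: the only adapted strategy `ϑ` with
`V^∞(·,ϑ(·)) ≥ 0` a.s. is `ϑ = 0`. -/
def NAcond {Ω : Type*} {mΩ : MeasurableSpace Ω} {T d : ℕ} (P : Measure Ω)
    (ℱ : Fin T → MeasurableSpace Ω) (V : Ω → (Fin T → Fin d → ℝ) → EReal) : Prop :=
  ∀ ϑ, AdaptedStrat ℱ ϑ → (∀ᵐ ω ∂P, 0 ≤ recessionModel V ω (ϑ ω)) →
    ∀ᵐ ω ∂P, ϑ ω = 0

/-!
Suitably rescaled selections of the random set `K = {x | f ≤ V(x)}` have their limit points in the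
asymptotic cone of `K`, hence among the directions with `V^∞ ≥ 0`; such a direction is excluded by
NA as soon as it is adapted. Extracting a convergent subsequence from information available at time
`t` spoils adaptedness before `t`, so one argues backwards in time, about sequences of which only
the coordinates from time `t` on are adapted. If coordinate `t` outgrew the scale, one could rescale
by it instead: the earlier coordinates would tend to zero, trivially an adapted limit, and
coordinate `t`, along an `𝓕 t`-measurable random subsequence, to a vector of norm one, contradicting
the claim for `t + 1`. So coordinate `t` is of the order of the scale and can itself be made to
converge, which reduces the claim for `t` to the claim for `t + 1`.

Strategies are thus bounded in probability, and so are claims with `f ≤ g ≤ V(ϑ)`, because the upper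
semicontinuous functions `V(ω, ·)` are bounded above on balls.
-/

section BoundedInProbability

variable {Ω E F : Type*} {mΩ : MeasurableSpace Ω} {P : Measure Ω}
  [NormedAddCommGroup E] [NormedAddCommGroup F]

/-- Boundedness in probability of a family of random vectors. The threshold `ε` ranges over
`ℝ≥0∞`, and the members of the family are not required to be measurable. -/
def IsBoundedInProbability (P : Measure Ω) (S : Set (Ω → E)) : Prop :=
  ∀ ε : ℝ≥0∞, 0 < ε → ∃ M : ℝ, 0 < M ∧ ∀ g ∈ S, P {ω | M ≤ ‖g ω‖} < ε

theorem isLittleO_natCast_succ_sq :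
    (fun n : ℕ => (n : ℝ)) =o[atTop] fun n : ℕ => ((n : ℝ) + 1) ^ 2 := by
  have hsucc : Tendsto (fun n : ℕ => (n : ℝ) + 1) atTop atTop :=
    tendsto_atTop_add_const_right _ _ tendsto_natCast_atTop_atTop
  have hle : (fun n : ℕ => (n : ℝ)) =O[atTop] fun n : ℕ => (n : ℝ) + 1 :=
    .of_norm_le fun n => by
      rw [Real.norm_of_nonneg n.cast_nonneg]
      linarith
  have hlt : (fun x : ℝ => x ^ 1) =o[atTop] fun x : ℝ => x ^ 2 :=
    Asymptotics.isLittleO_pow_pow_atTop_of_lt one_lt_two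
  exact hle.trans_isLittleO ((hlt.comp_tendsto hsucc).congr_left (by simp))

namespace IsBoundedInProbability

theorem of_ae_isBigO [IsFiniteMeasure P] {S : Set (Ω → E)}
    (hmeas : ∀ g ∈ S, AEStronglyMeasurable g P)
    (hgrowth : ∀ g : ℕ → Ω → E, (∀ n, g n ∈ S) →
      ∀ᵐ ω ∂P, (fun n => g n ω) =O[atTop] fun n : ℕ => (n : ℝ)) :
    IsBoundedInProbability P S := by
  intro ε hε
  by_contra! hunbounded
  choose g hgS hg using fun n : ℕ => hunbounded (((n : ℝ) + 1) ^ 2) (by positivity)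
  have hprob : TendstoInMeasure P (fun (n : ℕ) ω => (((n : ℝ) + 1) ^ 2)⁻¹ * ‖g n ω‖) atTop 0 := by
    refine tendstoInMeasure_of_tendsto_ae (fun n => (hmeas _ (hgS n)).norm.const_mul _) ?_
    filter_upwards [hgrowth g hgS] with ω hω
    exact (hω.norm_left.trans_isLittleO isLittleO_natCast_succ_sq).tendsto_inv_smul_nhds_zero
  obtain ⟨n, hn⟩ := ((tendsto_order.1 (tendstoInMeasure_iff_norm.1 hprob 1 one_pos)).2 ε hε).exists
  refine (hg n).not_gt (lt_of_le_of_lt (measure_mono fun ω hω => ?_) hn)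
  have hpos : (0 : ℝ) < ((n : ℝ) + 1) ^ 2 := by positivity
  simpa [abs_of_pos hpos, ← div_eq_inv_mul, one_le_div hpos] using hω

theorem of_ae_isBounded [IsFiniteMeasure P] {S : Set (Ω → E)} {B : Ω → Set E}
    (hmeas : ∀ g ∈ S, AEStronglyMeasurable g P)
    (hB : ∀ᵐ ω ∂P, Bornology.IsBounded (B ω)) (hS : ∀ g ∈ S, ∀ᵐ ω ∂P, g ω ∈ B ω) :
    IsBoundedInProbability P S := by
  refine of_ae_isBigO hmeas fun g hg => ?_
  filter_upwards [hB, ae_all_iff.2 fun n => hS _ (hg n)] with ω hBω hgω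
  obtain ⟨C, hC⟩ := hBω.exists_norm_le
  refine .of_bound C ?_
  filter_upwards [eventually_ge_atTop 1] with n hn
  have hn' : (1 : ℝ) ≤ ‖(n : ℝ)‖ := by simpa using hn
  exact (hC _ (hgω n)).trans
    (le_mul_of_one_le_right ((norm_nonneg _).trans (hC _ (hgω n))) hn')

theorem of_ae_mem_relation [IsFiniteMeasure P] {X : Set (Ω → E)} {S : Set (Ω → F)}
    {R : Ω → Set (E × F)} (hX : IsBoundedInProbability P X)
    (hXmeas : ∀ x ∈ X, AEStronglyMeasurable x P) (hSmeas : ∀ g ∈ S, AEStronglyMeasurable g P)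
    (hR : ∀ᵐ ω ∂P, ∀ c, Bornology.IsBounded (Prod.snd '' {p ∈ R ω | ‖p.1‖ < c}))
    (hS : ∀ g ∈ S, ∃ x ∈ X, ∀ᵐ ω ∂P, (x ω, g ω) ∈ R ω) :
    IsBoundedInProbability P S := by
  intro ε hε
  obtain ⟨c, -, hc⟩ := hX (ε / 2) (ENNReal.half_pos hε.ne')
  have htruncated : IsBoundedInProbability P
      {h : Ω → F | AEStronglyMeasurable h P ∧ ∀ᵐ ω ∂P,
        h ω ∈ insert 0 (Prod.snd '' {p ∈ R ω | ‖p.1‖ < c})} :=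
    of_ae_isBounded (fun h hh => hh.1) (hR.mono fun ω hω => (hω c).insert 0) fun h hh => hh.2
  obtain ⟨M, hMpos, hM⟩ := htruncated (ε / 2) (ENNReal.half_pos hε.ne')
  refine ⟨M, hMpos, fun g hg => ?_⟩
  obtain ⟨x, hx, hxg⟩ := hS g hg
  have hnull : NullMeasurableSet {ω | ‖x ω‖ < c} P :=
    (hXmeas x hx).norm.aemeasurable.nullMeasurable measurableSet_Iio
  have hsmall : P {ω | M ≤ ‖{ω | ‖x ω‖ < c}.indicator g ω‖} < ε / 2 := by
    refine hM _ ⟨(hSmeas g hg).indicator₀ hnull, ?_⟩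
    filter_upwards [hxg] with ω hω
    by_cases hlt : ‖x ω‖ < c
    · simpa [hlt] using .inr ⟨x ω, hω, hlt⟩
    · simp [hlt]
  calc P {ω | M ≤ ‖g ω‖}
      ≤ P ({ω | c ≤ ‖x ω‖} ∪ {ω | M ≤ ‖{ω | ‖x ω‖ < c}.indicator g ω‖}) := by
        refine measure_mono fun ω hω => (le_or_gt c ‖x ω‖).imp id fun hlt => ?_
        simpa [Set.indicator, hlt] using hω
    _ ≤ P {ω | c ≤ ‖x ω‖} + P {ω | M ≤ ‖{ω | ‖x ω‖ < c}.indicator g ω‖} := measure_union_le _ _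
    _ < ε / 2 + ε / 2 := ENNReal.add_lt_add (hc x hx) hsmall
    _ = ε := ENNReal.add_halves ε

end IsBoundedInProbability

end BoundedInProbability

section RandomSubsequence

variable {Ω E : Type*} {m : MeasurableSpace Ω}

theorem exists_measurable_nat_mem {A : ℕ → Set Ω} (hA : ∀ n, MeasurableSet (A n)) :
    ∃ τ : Ω → ℕ, Measurable τ ∧ ∀ ω, (∃ n, ω ∈ A n) → ω ∈ A (τ ω) := by
  classical
  have hex : ∀ ω, ∃ n, ω ∈ A n ∪ (⋃ i, A i)ᶜ := fun ω => by
    by_cases hω : ω ∈ ⋃ i, A i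
    · exact (Set.mem_iUnion.1 hω).imp fun n hn => .inl hn
    · exact ⟨0, .inr hω⟩
  exact ⟨fun ω => Nat.find (hex ω),
    measurable_find hex fun n => (hA n).union (MeasurableSet.iUnion hA).compl,
    fun ω hω => (Nat.find_spec (hex ω)).resolve_right (not_not.2 (Set.mem_iUnion.2 hω))⟩

/-- A random subsequence observable from the information `m`: a sequence of `m`-measurable random
indices tending to infinity. Only `k ≤ τ k` is required; the indices need not increase. -/
structure IsRandomSubseq (m : MeasurableSpace Ω) (τ : ℕ → Ω → ℕ) : Prop where
  measurable : ∀ k, Measurable[m] (τ k)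
  le_apply : ∀ k ω, k ≤ τ k ω

theorem exists_isRandomSubseq_mem {A : ℕ → ℕ → Set Ω} (hA : ∀ k n, MeasurableSet (A k n)) :
    ∃ τ, IsRandomSubseq m τ ∧ ∀ k ω, (∃ n, k ≤ n ∧ ω ∈ A k n) → ω ∈ A k (τ k ω) := by
  choose τ hτ hτA using fun k =>
    exists_measurable_nat_mem fun n => (MeasurableSet.const (k ≤ n)).inter (hA k n)
  refine ⟨fun k ω => max k (τ k ω), ⟨fun k => measurable_const.max (hτ k),
    fun k ω => le_max_left _ _⟩, fun k ω hω => ?_⟩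
  obtain ⟨hle, hmem⟩ : k ≤ τ k ω ∧ ω ∈ A k (τ k ω) := hτA k ω hω
  simpa only [max_eq_right hle] using hmem

namespace IsRandomSubseq

variable {τ : ℕ → Ω → ℕ}

theorem mono {m' : MeasurableSpace Ω} (hτ : IsRandomSubseq m τ) (hm : m ≤ m') :
    IsRandomSubseq m' τ :=
  ⟨fun k => (hτ.measurable k).mono hm le_rfl, hτ.le_apply⟩

theorem tendsto_atTop (hτ : IsRandomSubseq m τ) (ω : Ω) : Tendsto (fun k => τ k ω) atTop atTop :=
  tendsto_atTop_mono (fun k => hτ.le_apply k ω) tendsto_id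

theorem measurable_comp [MeasurableSpace E] {u : ℕ → Ω → E} (hτ : IsRandomSubseq m τ)
    (hu : ∀ n, Measurable (u n)) (k : ℕ) : Measurable fun ω => u (τ k ω) ω :=
  (measurable_from_prod_countable_left (f := fun p : Ω × ℕ => u p.2 p.1) hu).comp
    (measurable_id.prodMk (hτ.measurable k))

end IsRandomSubseq

variable [MeasurableSpace E] {u : ℕ → Ω → E}

theorem exists_frequently_mem_refinement [PseudoMetricSpace E] [SecondCountableTopology E]
    [OpensMeasurableSpace E] [Nonempty E] (hu : ∀ n, Measurable (u n)) {A : ℕ → Set Ω}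
    (hA : ∀ n, MeasurableSet (A n)) {ε : ℝ} (hε : 0 < ε) :
    ∃ B : ℕ → Set Ω, (∀ n, MeasurableSet (B n)) ∧ (∀ n, B n ⊆ A n) ∧
      (∀ n n' ω, ω ∈ B n → ω ∈ B n' → dist (u n ω) (u n' ω) < ε) ∧
      ∀ ω, (∃ C, IsCompact C ∧ ∀ᶠ n in atTop, u n ω ∈ C) →
        (∃ᶠ n in atTop, ω ∈ A n) → ∃ᶠ n in atTop, ω ∈ B n := by
  let x := TopologicalSpace.denseSeq E
  obtain ⟨c, hc, hfrequently⟩ := exists_measurable_nat_mem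
    (A := fun i => {ω | ∃ᶠ n in atTop, ω ∈ A n ∩ {ω | dist (u n ω) (x i) < ε / 2}}) fun i => by
      simp only [← mem_limsup_iff_frequently_mem, Set.ofPred_mem_eq]
      exact .measurableSet_limsup fun n =>
        (hA n).inter (measurableSet_lt ((hu n).dist measurable_const) measurable_const)
  have hcenter : Measurable fun ω => x (c ω) := (measurable_from_nat (f := x)).comp hc
  refine ⟨fun n => A n ∩ {ω | dist (u n ω) (x (c ω)) < ε / 2}, fun n =>
    (hA n).inter (measurableSet_lt ((hu n).dist hcenter) measurable_const),
    fun n => Set.inter_subset_left, fun n n' ω hn hn' => ?_, fun ω ⟨C, hC, huC⟩ hω => ?_⟩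
  · calc dist (u n ω) (u n' ω)
        ≤ dist (u n ω) (x (c ω)) + dist (u n' ω) (x (c ω)) := dist_triangle_right _ _ _
      _ < ε / 2 + ε / 2 := add_lt_add hn.2 hn'.2
      _ = ε := add_halves ε
  · have : NeBot (atTop ⊓ 𝓟 {n | ω ∈ A n}) := frequently_mem_iff_neBot.1 hω
    obtain ⟨y, -, hy⟩ := hC.exists_mapClusterPt (f := atTop ⊓ 𝓟 {n | ω ∈ A n})
      (le_principal_iff.2 (mem_map.2 (huC.filter_mono inf_le_left)))
    obtain ⟨i, hi⟩ := (TopologicalSpace.denseRange_denseSeq E).exists_dist_lt y (half_pos hε)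
    have hball : ∃ᶠ n in atTop ⊓ 𝓟 {n | ω ∈ A n}, u n ω ∈ Metric.ball (x i) (ε / 2) :=
      hy.frequently (Metric.isOpen_ball.mem_nhds hi)
    exact hfrequently ω ⟨i, frequently_inf_principal.1 hball⟩

theorem exists_nested_cells [PseudoMetricSpace E] [SecondCountableTopology E]
    [OpensMeasurableSpace E] [Nonempty E] (hu : ∀ n, Measurable (u n)) {ε : ℕ → ℝ}
    (hε : ∀ k, 0 < ε k) :
    ∃ A : ℕ → ℕ → Set Ω, (∀ k n, MeasurableSet (A k n)) ∧ (∀ n, Antitone (A · n)) ∧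
      (∀ k n n' ω, ω ∈ A k n → ω ∈ A k n' → dist (u n ω) (u n' ω) < ε k) ∧
      ∀ k ω, (∃ C, IsCompact C ∧ ∀ᶠ n in atTop, u n ω ∈ C) → ∃ᶠ n in atTop, ω ∈ A k n := by
  choose! B hBmeas hBsub hBdist hBfreq using
    fun (k : ℕ) (A : ℕ → Set Ω) (hA : ∀ n, MeasurableSet (A n)) =>
      exists_frequently_mem_refinement hu hA (hε k)
  let A : ℕ → ℕ → Set Ω := fun k => Nat.rec (B 0 fun _ => Set.univ) (fun k => B (k + 1)) k
  have hA : ∀ k n, MeasurableSet (A k n) := fun k => by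
    induction k with
    | zero => exact hBmeas 0 _ fun _ => .univ
    | succ k ih => exact hBmeas (k + 1) _ ih
  refine ⟨A, hA, fun n => antitone_nat_of_succ_le fun k => hBsub (k + 1) _ (hA k) n,
    fun k => ?_, fun k ω hω => ?_⟩
  · cases k with
    | zero => exact hBdist 0 _ fun _ => .univ
    | succ k => exact hBdist (k + 1) _ (hA k)
  · induction k with
    | zero => exact hBfreq 0 _ (fun _ => .univ) ω hω (.of_forall fun _ => Set.mem_univ ω)
    | succ k ih => exact hBfreq (k + 1) _ (hA k) ω hω ih

/- The measurable Bolzano–Weierstrass theorem of Kabanov and Stricker. -/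
theorem exists_isRandomSubseq_tendsto [MetricSpace E] [SecondCountableTopology E]
    [CompleteSpace E] [BorelSpace E] [Nonempty E] (hu : ∀ n, Measurable (u n)) :
    ∃ (τ : ℕ → Ω → ℕ) (L : Ω → E), IsRandomSubseq m τ ∧ Measurable L ∧
      ∀ ω, (∃ C, IsCompact C ∧ ∀ᶠ n in atTop, u n ω ∈ C) →
        Tendsto (fun k => u (τ k ω) ω) atTop (𝓝 (L ω)) := by
  obtain ⟨A, hAmeas, hAanti, hAdist, hAfreq⟩ :=
    exists_nested_cells hu (ε := fun k => 1 / ((k : ℝ) + 1)) fun k => by positivity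
  obtain ⟨τ, hτ, hτA⟩ := exists_isRandomSubseq_mem hAmeas
  refine ⟨τ, fun ω => limUnder atTop fun k => u (τ k ω) ω, hτ,
    (StronglyMeasurable.limUnder fun k => (hτ.measurable_comp hu k).stronglyMeasurable).measurable,
    fun ω hω => ?_⟩
  have hcell : ∀ N k, N ≤ k → ω ∈ A N (τ k ω) := fun N k hNk =>
    hAanti _ hNk (hτA k ω (frequently_atTop.1 (hAfreq k ω hω) k))
  refine (cauchySeq_of_le_tendsto_0 (fun k : ℕ => 1 / ((k : ℝ) + 1)) (fun k l N hk hl => ?_)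
    tendsto_one_div_add_atTop_nhds_zero_nat).tendsto_limUnder
  exact (hAdist N _ _ ω (hcell N k hk) (hcell N l hl)).le

theorem exists_isRandomSubseq_dominating [NormedAddCommGroup E] [OpensMeasurableSpace E]
    {r : ℕ → Ω → ℝ} (hu : ∀ n, Measurable (u n)) (hr : ∀ n, Measurable (r n)) :
    ∃ (τ : ℕ → Ω → ℕ) (ρ : ℕ → Ω → ℝ), IsRandomSubseq m τ ∧ (∀ k, Measurable (ρ k)) ∧
      ∀ ω, (fun k => r (τ k ω) ω) =o[atTop] (fun k => ρ k ω) ∧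
        (∀ k, ‖u (τ k ω) ω‖ ≤ ρ k ω) ∧
        (¬ (fun n => u n ω) =O[atTop] (fun n => r n ω) → ∀ k, ρ k ω = ‖u (τ k ω) ω‖) := by
  obtain ⟨τ, hτ, hτfast⟩ := exists_isRandomSubseq_mem
    (A := fun k n => {ω | k * ‖r n ω‖ < ‖u n ω‖}) fun k n =>
      measurableSet_lt ((hr n).norm.const_mul _) (hu n).norm
  refine ⟨τ, fun k ω => max (k * ‖r (τ k ω) ω‖) ‖u (τ k ω) ω‖, hτ,
    fun k => ((hτ.measurable_comp hr k).norm.const_mul _).max (hτ.measurable_comp hu k).norm,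
    fun ω => ⟨?_, fun k => le_max_right _ _, fun hnot k => max_eq_right (hτfast k ω ?_).le⟩⟩
  · refine Asymptotics.isLittleO_iff_nat_mul_le.2 fun n => ?_
    filter_upwards [eventually_ge_atTop n] with k hk
    calc (n : ℝ) * ‖r (τ k ω) ω‖ ≤ k * ‖r (τ k ω) ω‖ := by gcongr
      _ ≤ _ := (le_max_left _ _).trans (le_abs_self _)
  · by_contra! hbounded
    exact hnot (.of_bound k ((eventually_ge_atTop k).mono fun n hn => not_lt.1 (hbounded n hn)))

end RandomSubsequence

theorem isBigO_of_tendsto_inv_smul {ι E : Type*} [NormedAddCommGroup E] [NormedSpace ℝ E]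
    {l : Filter ι} {r : ι → ℝ} {y : ι → E} {z : E} (hr : ∀ᶠ i in l, r i ≠ 0)
    (hy : Tendsto (fun i => (r i)⁻¹ • y i) l (𝓝 z)) : y =O[l] r := by
  have hsmul : (fun i => r i • (r i)⁻¹ • y i) =O[l] fun i => r i • (1 : ℝ) :=
    (Asymptotics.isBigO_refl r l).smul (hy.isBigO_one ℝ)
  refine hsmul.congr' ?_ (.of_eq (by simp))
  filter_upwards [hr] with i hi
  exact smul_inv_smul₀ hi _

theorem measurable_of_adapted_apply {Ω ι E : Type*} {mΩ : MeasurableSpace Ω} [Preorder ι]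
    {𝓕 : Filtration ι mΩ} [MeasurableSpace E] {x : Ω → ι → E}
    (hx : Adapted 𝓕 fun t ω => x ω t) : Measurable x :=
  measurable_pi_iff.2 fun t => (hx t).mono (𝓕.le t) le_rfl

section ScaledSequence

variable {Ω E : Type*} {mΩ : MeasurableSpace Ω} {P : Measure Ω} {T : ℕ}
  {𝓕 : Filtration (Fin T) mΩ} [MeasurableSpace E]
  {K : Ω → Set (Fin T → E)} {y : ℕ → Ω → Fin T → E} {r : ℕ → Ω → ℝ}

/-- A sequence of selections `y` of the random set `K` with scales `r` tending to infinity, adapted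
from time `j` on: the coordinates of `y` before `j` may anticipate the future, and the scales are
known at time `j`. The value `j = T` imposes no measurability. -/
structure IsScaledSeq (P : Measure Ω) (𝓕 : Filtration (Fin T) mΩ) (K : Ω → Set (Fin T → E))
    (j : ℕ) (y : ℕ → Ω → Fin T → E) (r : ℕ → Ω → ℝ) : Prop where
  measurable_coord : ∀ s : Fin T, j ≤ s → ∀ n, Measurable[𝓕 s] fun ω => y n ω s
  measurable_scale : ∀ s : Fin T, j ≤ s → ∀ n, Measurable[𝓕 s] (r n)
  mem : ∀ᵐ ω ∂P, ∀ n, y n ω ∈ K ω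
  tendsto_scale : ∀ᵐ ω ∂P, Tendsto (fun n => r n ω) atTop atTop

namespace IsScaledSeq

theorem mono {i j : ℕ} (hy : IsScaledSeq P 𝓕 K i y r) (hij : i ≤ j) : IsScaledSeq P 𝓕 K j y r :=
  ⟨fun s hs => hy.measurable_coord s (hij.trans hs),
    fun s hs => hy.measurable_scale s (hij.trans hs), hy.mem, hy.tendsto_scale⟩

theorem comp {j : Fin T} (hy : IsScaledSeq P 𝓕 K j y r) {τ : ℕ → Ω → ℕ}
    (hτ : IsRandomSubseq (𝓕 j) τ) :
    IsScaledSeq P 𝓕 K j (fun k ω => y (τ k ω) ω) (fun k ω => r (τ k ω) ω) where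
  measurable_coord s hs := (hτ.mono (𝓕.mono hs)).measurable_comp (hy.measurable_coord s hs)
  measurable_scale s hs := (hτ.mono (𝓕.mono hs)).measurable_comp (hy.measurable_scale s hs)
  mem := hy.mem.mono fun ω hω k => hω (τ k ω)
  tendsto_scale := hy.tendsto_scale.mono fun ω hω => hω.comp (hτ.tendsto_atTop ω)

theorem exists_dominating_scale [NormedAddCommGroup E] [OpensMeasurableSpace E] {j : Fin T}
    (hy : IsScaledSeq P 𝓕 K j y r) :
    ∃ (τ : ℕ → Ω → ℕ) (ρ : ℕ → Ω → ℝ), IsRandomSubseq (𝓕 j) τ ∧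
      IsScaledSeq P 𝓕 K j (fun k ω => y (τ k ω) ω) ρ ∧
      ∀ ω, (fun k => r (τ k ω) ω) =o[atTop] (fun k => ρ k ω) ∧
        (∀ k, ‖y (τ k ω) ω j‖ ≤ ρ k ω) ∧
        (¬ (fun n => y n ω j) =O[atTop] (fun n => r n ω) → ∀ k, ρ k ω = ‖y (τ k ω) ω j‖) := by
  obtain ⟨τ, ρ, hτ, hρ, hdom⟩ := exists_isRandomSubseq_dominating
    (hy.measurable_coord j le_rfl) (hy.measurable_scale j le_rfl)
  refine ⟨τ, ρ, hτ, ⟨(hy.comp hτ).measurable_coord,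
    fun s hs k => (hρ k).mono (𝓕.mono hs) le_rfl, (hy.comp hτ).mem, ?_⟩, hdom⟩
  filter_upwards [(hy.comp hτ).tendsto_scale] with ω hω
  refine tendsto_atTop_mono' _ ?_ hω
  filter_upwards [(hdom ω).1.bound one_pos] with k hk
  have hρ_nonneg : 0 ≤ ρ k ω := (norm_nonneg _).trans ((hdom ω).2.1 k)
  calc r (τ k ω) ω ≤ ‖r (τ k ω) ω‖ := le_abs_self _
    _ ≤ ρ k ω := by rwa [one_mul, Real.norm_of_nonneg hρ_nonneg] at hk

end IsScaledSeq

variable [NormedAddCommGroup E] [NormedSpace ℝ E]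

/-- The statement propagated by the backward induction on `j`: whenever a sequence of selections
of `K` adapted from time `j` on converges, after rescaling, in the coordinates before `j` to an
adapted limit, that limit vanishes. -/
def NoDirectionBefore (P : Measure Ω) (𝓕 : Filtration (Fin T) mΩ) (K : Ω → Set (Fin T → E))
    (j : ℕ) : Prop :=
  ∀ (y : ℕ → Ω → Fin T → E) (r : ℕ → Ω → ℝ) (z : Ω → Fin T → E), IsScaledSeq P 𝓕 K j y r →
    (∀ s : Fin T, s < j → Measurable[𝓕 s] fun ω => z ω s) →
    (∀ᵐ ω ∂P, ∀ s : Fin T, s < j →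
      Tendsto (fun n => (r n ω)⁻¹ • y n ω s) atTop (𝓝 (z ω s))) →
    ∀ᵐ ω ∂P, ∀ s : Fin T, s < j → z ω s = 0

namespace NoDirectionBefore

variable [ProperSpace E] [BorelSpace E] {z : Ω → Fin T → E} {j : Fin T}

theorem exists_subseq_tendsto_zero (hj : NoDirectionBefore P 𝓕 K (j + 1))
    (hy : IsScaledSeq P 𝓕 K j y r) (hz : ∀ s : Fin T, s < j → Measurable[𝓕 s] fun ω => z ω s)
    (hlim : ∀ᵐ ω ∂P, ∀ s : Fin T, s < j →
      Tendsto (fun n => (r n ω)⁻¹ • y n ω s) atTop (𝓝 (z ω s)))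
    (hbig : ∀ᵐ ω ∂P, (fun n => y n ω j) =O[atTop] fun n => r n ω) :
    ∃ σ, IsRandomSubseq (𝓕 j) σ ∧ ∀ᵐ ω ∂P, (∀ s : Fin T, s < j → z ω s = 0) ∧
      Tendsto (fun k => (r (σ k ω) ω)⁻¹ • y (σ k ω) ω j) atTop (𝓝 0) := by
  obtain ⟨σ, L, hσ, hL, hσL⟩ := exists_isRandomSubseq_tendsto (m := 𝓕 j)
    (u := fun n ω => (r n ω)⁻¹ • y n ω j) fun n =>
      (hy.measurable_scale j le_rfl n).inv.smul (hy.measurable_coord j le_rfl n)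
  have hσlim : ∀ᵐ ω ∂P, Tendsto (fun k => (r (σ k ω) ω)⁻¹ • y (σ k ω) ω j) atTop (𝓝 (L ω)) := by
    filter_upwards [hbig] with ω hω
    obtain ⟨C, hC_nonneg, hC⟩ := hω.exists_nonneg
    refine hσL ω ⟨Metric.closedBall 0 C, isCompact_closedBall 0 C, ?_⟩
    filter_upwards [hC.bound] with n hn
    rw [mem_closedBall_zero_iff, norm_smul, norm_inv, ← div_eq_inv_mul]
    exact div_le_of_le_mul₀ (norm_nonneg _) hC_nonneg hn
  have hzero := hj _ _ (fun ω => Function.update (z ω) j (L ω)) ((hy.comp hσ).mono j.val.le_succ)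
    (fun s hs => ?_) ?_
  · refine ⟨σ, hσ, ?_⟩
    filter_upwards [hzero, hσlim] with ω hω hωlim
    have hLω : L ω = 0 := by simpa using hω j j.val.lt_succ_self
    exact ⟨fun s hs => by simpa [hs.ne] using hω s (Nat.lt_succ_of_lt hs), hLω ▸ hωlim⟩
  · rcases (Nat.lt_succ_iff.1 hs).lt_or_eq with hlt | heq
    · simpa [ne_of_lt (show s < j from hlt)] using hz s hlt
    · obtain rfl : s = j := Fin.ext heq
      simpa using hL
  · filter_upwards [hlim, hσlim] with ω hω hωlim s hs
    rcases (Nat.lt_succ_iff.1 hs).lt_or_eq with hlt | heq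
    · simpa [ne_of_lt (show s < j from hlt), Function.comp_def] using
        (hω s hlt).comp (hσ.tendsto_atTop ω)
    · obtain rfl : s = j := Fin.ext heq
      simpa using hωlim

theorem ae_isBigO_apply (hj : NoDirectionBefore P 𝓕 K (j + 1)) (hy : IsScaledSeq P 𝓕 K j y r)
    (hbig : ∀ᵐ ω ∂P, ∀ s < j, (fun n => y n ω s) =O[atTop] fun n => r n ω) :
    ∀ᵐ ω ∂P, (fun n => y n ω j) =O[atTop] fun n => r n ω := by
  obtain ⟨τ, ρ, hτ, hρ, hdom⟩ := hy.exists_dominating_scale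
  obtain ⟨σ, hσ, hlim⟩ := hj.exists_subseq_tendsto_zero (z := 0) hρ (fun s _ => measurable_const)
    (hbig.mono fun ω hω s hs => (((hω s hs).comp_tendsto (hτ.tendsto_atTop ω)).trans_isLittleO
      (hdom ω).1).tendsto_inv_smul_nhds_zero)
    (.of_forall fun ω => .of_norm_le (hdom ω).2.1)
  filter_upwards [hlim, (hρ.comp hσ).tendsto_scale] with ω hω hωscale
  by_contra hnot
  have hone : ∀ᶠ k in atTop, ‖(ρ (σ k ω) ω)⁻¹ • y (τ (σ k ω) ω) ω j‖ = 1 := by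
    filter_upwards [hωscale.eventually_gt_atTop 0] with k hk
    rw [norm_smul, ← (hdom ω).2.2 hnot, norm_inv, Real.norm_of_nonneg hk.le, inv_mul_cancel₀ hk.ne']
  exact zero_ne_one (tendsto_nhds_unique (norm_zero (E := E) ▸ hω.2.norm)
    (tendsto_const_nhds.congr' (hone.mono fun k hk => hk.symm)))

theorem of_succ (hj : NoDirectionBefore P 𝓕 K (j + 1)) : NoDirectionBefore P 𝓕 K j := by
  intro y r z hy hz hlim
  have hbig : ∀ᵐ ω ∂P, ∀ s < j, (fun n => y n ω s) =O[atTop] fun n => r n ω := by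
    filter_upwards [hlim, hy.tendsto_scale] with ω hω hωscale s hs
    exact isBigO_of_tendsto_inv_smul (hωscale.eventually_ne_atTop 0) (hω s hs)
  obtain ⟨_, -, hzero⟩ := hj.exists_subseq_tendsto_zero hy hz hlim (hj.ae_isBigO_apply hy hbig)
  exact hzero.mono fun ω hω => hω.1

theorem of_le {i : ℕ} (hT : NoDirectionBefore P 𝓕 K T) (hi : i ≤ T) :
    NoDirectionBefore P 𝓕 K i :=
  Nat.decreasingInduction (fun k hk ih => of_succ (j := ⟨k, hk⟩) ih) hT hi

theorem ae_isBigO (hT : NoDirectionBefore P 𝓕 K T) (hy : IsScaledSeq P 𝓕 K 0 y r) :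
    ∀ᵐ ω ∂P, (fun n => y n ω) =O[atTop] fun n => r n ω := by
  simp only [Asymptotics.isBigO_pi, ae_all_iff]
  intro j
  induction j using WellFoundedLT.induction with
  | ind j ih =>
    exact (hT.of_le j.isLt).ae_isBigO_apply (hy.mono (Nat.zero_le _))
      (ae_all_iff.2 fun s => ae_all_iff.2 (ih s))

end NoDirectionBefore

theorem noDirectionBefore_of_asymptoticCone
    (hK : ∀ z : Ω → Fin T → E, Adapted 𝓕 (fun t ω => z ω t) →
      (∀ᵐ ω ∂P, z ω ∈ asymptoticCone ℝ (K ω)) → ∀ᵐ ω ∂P, z ω = 0) :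
    NoDirectionBefore P 𝓕 K T := by
  intro y r z hy hz hlim
  refine (hK z (fun s => hz s s.isLt) ?_).mono fun ω hω s _ => congrFun hω s
  filter_upwards [hlim, hy.mem, hy.tendsto_scale] with ω hω hωmem hωscale
  have hconv : Tendsto (fun n => (r n ω)⁻¹ • y n ω) atTop (𝓝 (z ω)) :=
    tendsto_pi_nhds.2 fun s => hω s s.isLt
  have hdir : Tendsto (fun n => y n ω) atTop (AffineSpace.asymptoticNhds ℝ (Fin T → E) (z ω)) := by
    refine (hωscale.atTop_smul_nhds_tendsto_asymptoticNhds hconv).congr' ?_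
    filter_upwards [hωscale.eventually_ne_atTop 0] with n hn
    exact smul_inv_smul₀ hn _
  exact (mem_asymptoticCone_iff ..).2 (hdir.frequently (.of_forall hωmem))

theorem isBoundedInProbability_adapted_selections [ProperSpace E] [BorelSpace E]
    [IsFiniteMeasure P]
    (hK : ∀ z : Ω → Fin T → E, Adapted 𝓕 (fun t ω => z ω t) →
      (∀ᵐ ω ∂P, z ω ∈ asymptoticCone ℝ (K ω)) → ∀ᵐ ω ∂P, z ω = 0) :
    IsBoundedInProbability P
      {x : Ω → Fin T → E | Adapted 𝓕 (fun t ω => x ω t) ∧ ∀ᵐ ω ∂P, x ω ∈ K ω} := by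
  refine .of_ae_isBigO (fun x hx => ?_) fun x hx => ?_
  · exact (measurable_of_adapted_apply hx.1).aestronglyMeasurable
  · exact (noDirectionBefore_of_asymptoticCone hK).ae_isBigO (r := fun n _ => n)
      ⟨fun s _ n => (hx n).1 s, fun _ _ _ => measurable_const, ae_all_iff.2 fun n => (hx n).2,
        .of_forall fun _ => tendsto_natCast_atTop_atTop⟩

end ScaledSequence

theorem exists_forall_mem_le_coe_of_isCompact {X : Type*} [TopologicalSpace X] {v : X → EReal}
    {s : Set X} (hs : IsCompact s) (hv : UpperSemicontinuousOn v s) (htop : ∀ x ∈ s, v x ≠ ⊤) :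
    ∃ b : ℝ, ∀ x ∈ s, v x ≤ b := by
  rcases s.eq_empty_or_nonempty with rfl | hne
  · exact ⟨0, fun x hx => hx.elim⟩
  · obtain ⟨x₀, hx₀, hmax⟩ := hv.exists_isMaxOn hne hs
    exact ⟨(v x₀).toReal, fun x hx => (hmax hx).trans (EReal.le_coe_toReal (htop x₀ hx₀))⟩

theorem isBounded_snd_image_hypograph {E : Type*} [SeminormedAddCommGroup E] [ProperSpace E]
    {v : E → EReal} (hv : UpperSemicontinuous v) (htop : ∀ x, v x ≠ ⊤) (a c : ℝ) :
    Bornology.IsBounded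
      (Prod.snd '' {p ∈ {p : E × ℝ | a ≤ p.2 ∧ (p.2 : EReal) ≤ v p.1} | ‖p.1‖ < c}) := by
  obtain ⟨b, hb⟩ := exists_forall_mem_le_coe_of_isCompact (isCompact_closedBall (0 : E) c)
    (hv.upperSemicontinuousOn _) fun x _ => htop x
  refine (Metric.isBounded_Icc a b).subset ?_
  rintro _ ⟨⟨x, β⟩, ⟨⟨haβ, hβ⟩, hx : ‖x‖ < c⟩, rfl⟩
  exact ⟨haβ, EReal.coe_le_coe_iff.1 (hβ.trans (hb x (mem_closedBall_zero_iff.2 hx.le)))⟩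

section MarketModel

variable {Ω : Type*} {mΩ : MeasurableSpace Ω} {P : Measure Ω} {T d : ℕ}
  {V : Ω → (Fin T → Fin d → ℝ) → EReal}

theorem recessionModel_nonneg_of_mem_asymptoticCone {ω : Ω} {a : ℝ} {z : Fin T → Fin d → ℝ}
    (hz : z ∈ asymptoticCone ℝ {x | (a : EReal) ≤ V ω x}) : 0 ≤ recessionModel V ω z := by
  have hfreq : ∃ᶠ p : ℝ × (Fin T → Fin d → ℝ) in atTop ×ˢ 𝓝 z, (a : EReal) ≤ V ω (p.1 • p.2) := by
    rwa [mem_asymptoticCone_iff, AffineSpace.asymptoticNhds_eq_smul, ← map₂_smul,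
      ← map_prod_eq_map₂, frequently_map] at hz
  refine le_iInf fun l => ?_
  have hlim : Tendsto (fun p : ℝ × (Fin T → Fin d → ℝ) => ((p.1⁻¹ * a : ℝ) : EReal))
      (atTop ×ˢ 𝓝 z) (𝓝 0) := by
    refine (continuous_coe_real_ereal.tendsto' 0 0 EReal.coe_zero).comp ?_
    simpa using ((tendsto_inv_atTop_zero (𝕜 := ℝ)).comp tendsto_fst).mul_const a
  refine le_of_tendsto_of_frequently hlim (hfreq.mp ?_)
  filter_upwards [(eventually_gt_atTop l.1).prod_mk (Metric.ball_mem_nhds z (one_div_pos.2 l.2))]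
    with ⟨δ, x⟩ ⟨hδ, hx⟩ ha
  have hδpos : 0 < δ := l.2.trans hδ
  calc ((δ⁻¹ * a : ℝ) : EReal) = (δ⁻¹ : ℝ) * (a : EReal) := EReal.coe_mul _ _
    _ ≤ (δ⁻¹ : ℝ) * V ω (δ • x) :=
      mul_le_mul_of_nonneg_left ha (EReal.coe_nonneg.2 (inv_nonneg.2 hδpos.le))
    _ ≤ _ := le_iSup₂_of_le (⟨δ, hδ⟩ : {δ : ℝ // l.1 < δ}) ⟨x, mem_ball_iff_norm.1 hx⟩ le_rfl

theorem NAcond.isBoundedInProbability [IsFiniteMeasure P] {𝓕 : Filtration (Fin T) mΩ}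
    (hNA : NAcond P 𝓕 V) (f : Ω → ℝ) :
    IsBoundedInProbability P {ϑ | AdaptedStrat 𝓕 ϑ ∧ ∀ᵐ ω ∂P, (f ω : EReal) ≤ V ω (ϑ ω)} :=
  isBoundedInProbability_adapted_selections (K := fun ω => {x | (f ω : EReal) ≤ V ω x})
    fun z hz hcone => hNA z hz (hcone.mono fun _ => recessionModel_nonneg_of_mem_asymptoticCone)

end MarketModel

theorem stmt6_general {Ω : Type*} {mΩ : MeasurableSpace Ω} (P : Measure Ω) [IsFiniteMeasure P]
    {T d : ℕ} (𝓕 : Filtration (Fin T) mΩ) (V : Ω → (Fin T → Fin d → ℝ) → EReal)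
    (hVtop : ∀ᵐ ω ∂P, ∀ x, V ω x ≠ ⊤) (hVusc : ∀ᵐ ω ∂P, UpperSemicontinuous (V ω))
    (hNA : NAcond P 𝓕 V) (f : Ω → ℝ) :
    IsBoundedInProbability P {g : Ω → ℝ | AEStronglyMeasurable g P ∧
      ∃ ϑ, AdaptedStrat 𝓕 ϑ ∧ ∀ᵐ ω ∂P, f ω ≤ g ω ∧ (g ω : EReal) ≤ V ω (ϑ ω)} := by
  refine (hNA.isBoundedInProbability f).of_ae_mem_relation
    (R := fun ω => {p | f ω ≤ p.2 ∧ (p.2 : EReal) ≤ V ω p.1}) (fun ϑ hϑ => ?_)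
    (fun g hg => hg.1) ?_ ?_
  · exact (measurable_of_adapted_apply hϑ.1).aestronglyMeasurable
  · filter_upwards [hVtop, hVusc] with ω htop husc c
    exact isBounded_snd_image_hypograph husc htop (f ω) c
  · rintro g ⟨-, ϑ, hϑ, hg⟩
    refine ⟨ϑ, ⟨hϑ, hg.mono fun ω hω => ?_⟩, hg⟩
    exact (EReal.coe_le_coe_iff.2 hω.1).trans hω.2

/-- a normal integrand market model satisfying NA is viable: for every
finite random variable `f`, the set `𝒞_f` of superhedgeable claims dominating `f` is
bounded in probability. -/
theorem stmt6 {Ω : Type*} {mΩ : MeasurableSpace Ω} (P : Measure Ω) [IsProbabilityMeasure P]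
    (T d : ℕ) (hT : 1 ≤ T) (hd : 1 ≤ d)
    (ℱ : Fin T → MeasurableSpace Ω) (hℱmono : Monotone ℱ) (hℱle : ∀ t, ℱ t ≤ mΩ)
    -- V is a normal integrand market model:
    (V : Ω → (Fin T → Fin d → ℝ) → EReal)
    (hVjm : Measurable (Function.uncurry V))
    (hV0 : ∀ᵐ ω ∂P, V ω 0 = 0)
    (hVnotTop : ∀ ω x, V ω x ≠ ⊤)
    (hVusc : ∀ᵐ ω ∂P, UpperSemicontinuous (V ω))
    (hVhypo : HypoClosedMeas (mΩ := mΩ) V)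
    -- satisfying the no-arbitrage condition:
    (hNA : NAcond P ℱ V)
    (f : Ω → ℝ) (hf : Measurable f) :
    -- 𝒞_f is bounded in probability
    ∀ ε : ℝ, 0 < ε → ∃ M : ℝ, 0 < M ∧
      ∀ g : Ω → ℝ, Measurable g →
        (∃ ϑ, AdaptedStrat ℱ ϑ ∧
          ∀ᵐ ω ∂P, f ω ≤ g ω ∧ (g ω : EReal) ≤ V ω (ϑ ω)) →
        P {ω | M ≤ |g ω|} < ENNReal.ofReal ε := by
  intro ε hε
  obtain ⟨M, hM, hbound⟩ := stmt6_general P ⟨ℱ, hℱmono, hℱle⟩ V (.of_forall hVnotTop) hVusc hNA f _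
    (ENNReal.ofReal_pos.2 hε)
  exact ⟨M, hM, fun g hg hdom => hbound g ⟨hg.aestronglyMeasurable, hdom⟩⟩

end
end

section
/- Let (f_n) be a sequence of 𝓕-measurable random vectors Ω → ℝ^n such that liminf_n |f_n| < ∞ almost surely. Then there exists a strictly increasing sequence of 𝓕-measurable random indices τ(n) : Ω → ℕ (τ(n)(ω) < τ(n+1)(ω) for all n, ω) such that the random subsequence ω ↦ f_{τ(n)(ω)}(ω) converges almost surely to an 𝓕-measurable random vector in L^0(𝓕;ℝ^n). -/
open MeasureTheory Filter Topology
open scoped ENNReal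

noncomputable section

/-! Call a set-valued map `F : Ω → Set E` weakly measurable if `{ω | F ω ∩ U ≠ ∅}` is measurable
for every open `U`. By the Kuratowski–Ryll-Nardzewski theorem, such a map with closed values in a
Polish space has a measurable selection. The map sending `ω` to the set of cluster points of
`(f_k(ω))` is weakly measurable when `E` is σ-compact: `U` is then a countable union of compact
sets, and a compact set contains a cluster point as soon as the sequence frequently visits each of
its neighbourhoods. Given a measurable cluster point `g`, one picks `τ(j)` recursively as an index
`k > τ(j - 1)` with `f_k(ω)` within `2⁻ʲ` of `g(ω)`. -/

open Set Metric

section MeasurableChoice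

variable {Ω : Type*} [MeasurableSpace Ω]

lemma measurable_frequently {ι : Type*} [Countable ι] {l : Filter ι} [l.IsCountablyGenerated]
    {p : ι → Ω → Prop} (hp : ∀ i, Measurable (p i)) :
    Measurable fun ω => ∃ᶠ i in l, p i ω := by
  obtain ⟨s, hs⟩ := l.exists_antitone_basis
  simp only [hs.toHasBasis.frequently_iff, true_imp_iff]
  exact .forall fun n => .exists fun i => measurable_const.and (hp i)

lemma exists_measurable_nat_selection {p : ℕ → Ω → Prop} (hp : ∀ k, Measurable (p k)) :
    ∃ c : Ω → ℕ, Measurable c ∧ ∀ ω, (∃ k, p k ω) → p (c ω) ω := by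
  classical
  have hex : ∀ ω, ∃ k, (∃ m, p m ω) → p k ω := fun ω => by
    by_cases h : ∃ m, p m ω
    · exact h.imp fun _ hk _ => hk
    · exact ⟨0, fun h' => absurd h' h⟩
  exact ⟨fun ω => Nat.find (hex ω),
    measurable_find hex fun k => measurableSet_setOfPred.2 ((Measurable.exists hp).imp (hp k)),
    fun ω => Nat.find_spec (hex ω)⟩

lemma exists_measurable_nat_seq {R : ℕ → ℕ → ℕ → Ω → Prop} (hR : ∀ j a b, Measurable (R j a b))
    {c₀ : Ω → ℕ} (hc₀ : Measurable c₀) :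
    ∃ c : ℕ → Ω → ℕ, (∀ j, Measurable (c j)) ∧ c 0 = c₀ ∧
      ∀ j ω, (∃ b, R j (c j ω) b ω) → R j (c j ω) (c (j + 1) ω) ω := by
  have hstep (j : ℕ) (c : Ω → ℕ) (hc : Measurable c) (b : ℕ) :
      Measurable fun ω => R j (c ω) b ω :=
    (measurable_from_prod_countable_right (f := fun q : ℕ × Ω => R j q.1 b q.2)
      fun a => hR j a b).comp (hc.prodMk measurable_id)
  choose! next hnext_meas hnext using fun (j : ℕ) (c : Ω → ℕ) (hc : Measurable c) =>
    exists_measurable_nat_selection (hstep j c hc)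
  let c : ℕ → Ω → ℕ := Nat.rec c₀ next
  have hc : ∀ j, Measurable (c j) := fun j => by
    induction j with
    | zero => exact hc₀
    | succ j ih => exact hnext_meas j (c j) ih
  exact ⟨c, hc, rfl, fun j => hnext j (c j) (hc j)⟩

lemma exists_measurable_extraction_of_frequently {p : ℕ → ℕ → Ω → Prop}
    (hp : ∀ j k, Measurable (p j k)) :
    ∃ τ : ℕ → Ω → ℕ, (∀ j, Measurable (τ j)) ∧ (∀ j ω, τ j ω < τ (j + 1) ω) ∧
      ∀ j ω, (∃ᶠ k in atTop, p j k ω) → p j (τ j ω) ω := by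
  let R (j a b : ℕ) (ω : Ω) : Prop := a < b ∧ ((∃ᶠ k in atTop, p j k ω) → p j b ω)
  have hR : ∀ j a b, Measurable (R j a b) := fun j a b =>
    measurable_const.and ((measurable_frequently (hp j)).imp (hp j b))
  have hR_exists : ∀ j a ω, ∃ b, R j a b ω := fun j a ω => by
    by_cases hfreq : ∃ᶠ k in atTop, p j k ω
    · obtain ⟨b, hab, hb⟩ := frequently_atTop'.1 hfreq a
      exact ⟨b, hab, fun _ => hb⟩
    · exact ⟨a + 1, a.lt_succ_self, fun h => absurd h hfreq⟩
  obtain ⟨c, hc, -, hcR⟩ := exists_measurable_nat_seq hR (measurable_const (a := 0))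
  have hc_succ : ∀ j ω, R j (c j ω) (c (j + 1) ω) ω := fun j ω => hcR j ω (hR_exists j _ ω)
  exact ⟨fun j => c (j + 1), fun j => hc (j + 1), fun j ω => (hc_succ (j + 1) ω).1,
    fun j ω => (hc_succ j ω).2⟩

lemma exists_measurable_subseq_tendsto_of_mapClusterPt {E : Type*} [PseudoMetricSpace E]
    [SecondCountableTopology E] [MeasurableSpace E] [OpensMeasurableSpace E] {f : ℕ → Ω → E}
    (hf : ∀ k, Measurable (f k)) {g : Ω → E} (hg : Measurable g) :
    ∃ τ : ℕ → Ω → ℕ, (∀ j, Measurable (τ j)) ∧ (∀ j ω, τ j ω < τ (j + 1) ω) ∧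
      ∀ ω, MapClusterPt (g ω) atTop (f · ω) → Tendsto (fun j => f (τ j ω) ω) atTop (𝓝 (g ω)) := by
  obtain ⟨τ, hτ, hτ_lt, hτ_close⟩ := exists_measurable_extraction_of_frequently
    (p := fun j k ω => dist (f k ω) (g ω) < (1 / 2) ^ j)
    fun j k => measurableSet_setOfPred.1 (measurableSet_lt ((hf k).dist hg) measurable_const)
  refine ⟨τ, hτ, hτ_lt, fun ω hω => tendsto_iff_dist_tendsto_zero.2 ?_⟩
  have hclose : ∀ j, dist (f (τ j ω) ω) (g ω) ≤ (1 / 2) ^ j := fun j =>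
    (hτ_close j ω (hω.frequently (ball_mem_nhds _ (by positivity)))).le
  exact squeeze_zero (fun _ => dist_nonneg) hclose
    (tendsto_pow_atTop_nhds_zero_of_lt_one (by norm_num) (by norm_num))

end MeasurableChoice

section MeasurableSelection

variable {Ω E : Type*} [MeasurableSpace Ω]

/-- Weak (or lower) measurability of a set-valued map, the measurability notion required by the
Kuratowski–Ryll-Nardzewski selection theorem. The values of `F` may be empty. -/
def IsWeaklyMeasurable [TopologicalSpace E] (F : Ω → Set E) : Prop :=
  ∀ ⦃U : Set E⦄, IsOpen U → MeasurableSet {ω | (F ω ∩ U).Nonempty}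

lemma IsWeaklyMeasurable.exists_measurable_approx [PseudoMetricSpace E]
    [TopologicalSpace.SeparableSpace E] [Nonempty E] [MeasurableSpace E] {F : Ω → Set E}
    (hF : IsWeaklyMeasurable F) {ε : ℕ → ℝ} (hε : ∀ j, 0 < ε j) :
    ∃ x : ℕ → Ω → E, (∀ j, Measurable (x j)) ∧ ∀ ω, (F ω).Nonempty →
      ∀ j, (F ω ∩ (ball (x j ω) (ε j) ∩ ball (x (j + 1) ω) (ε (j + 1)))).Nonempty := by
  let d := TopologicalSpace.denseSeq E
  have hd : ∀ (y : E) {r : ℝ}, 0 < r → ∃ i, y ∈ ball (d i) r := fun y _ hr =>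
    (TopologicalSpace.denseRange_denseSeq E).exists_dist_lt y hr
  obtain ⟨c₀, hc₀_meas, hc₀⟩ := exists_measurable_nat_selection fun i =>
    measurableSet_setOfPred.1 (hF (isOpen_ball (x := d i) (ε := ε 0)))
  obtain ⟨c, hc_meas, rfl, hc⟩ := exists_measurable_nat_seq
    (fun j a b => measurableSet_setOfPred.1
      (hF ((isOpen_ball (x := d a) (ε := ε j)).inter (isOpen_ball (x := d b) (ε := ε (j + 1))))))
    hc₀_meas
  refine ⟨fun j ω => d (c j ω), fun j => measurable_from_nat.comp (hc_meas j), ?_⟩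
  intro ω ⟨y₀, hy₀⟩
  have hstep : ∀ j, (F ω ∩ ball (d (c j ω)) (ε j)).Nonempty →
      (F ω ∩ (ball (d (c j ω)) (ε j) ∩ ball (d (c (j + 1) ω)) (ε (j + 1)))).Nonempty := by
    rintro j ⟨y, hyF, hy⟩
    obtain ⟨b, hb⟩ := hd y (hε (j + 1))
    exact hc j ω ⟨b, y, hyF, hy, hb⟩
  have hball : ∀ j, (F ω ∩ ball (d (c j ω)) (ε j)).Nonempty := fun j => by
    induction j with
    | zero => exact hc₀ ω ((hd y₀ (hε 0)).imp fun i hi => ⟨y₀, hy₀, hi⟩)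
    | succ j ih => exact (hstep j ih).mono (inter_subset_inter_right _ inter_subset_right)
  exact fun j => hstep j (hball j)

lemma exists_mem_tendsto_of_inter_ball_nonempty [PseudoMetricSpace E] [CompleteSpace E]
    {C : Set E} (hC : IsClosed C) {x : ℕ → E}
    (hx : ∀ j, (C ∩ (ball (x j) ((1 / 2) ^ j) ∩ ball (x (j + 1)) ((1 / 2) ^ (j + 1)))).Nonempty) :
    ∃ a ∈ C, Tendsto x atTop (𝓝 a) := by
  choose y hyC hy hy' using hx
  have hpow : Tendsto (fun j : ℕ => (1 / 2 : ℝ) ^ j) atTop (𝓝 0) :=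
    tendsto_pow_atTop_nhds_zero_of_lt_one (by norm_num) (by norm_num)
  have hdist : ∀ j, dist (x j) (x (j + 1)) ≤ 2 * (1 / 2) ^ j := fun j => calc
    dist (x j) (x (j + 1)) ≤ dist (y j) (x j) + dist (y j) (x (j + 1)) := dist_triangle_left _ _ _
    _ ≤ (1 / 2) ^ j + (1 / 2) ^ (j + 1) := add_le_add (hy j).le (hy' j).le
    _ ≤ 2 * (1 / 2) ^ j := by rw [pow_succ]; linarith [pow_pos (one_half_pos (α := ℝ)) j]
  obtain ⟨a, ha⟩ := cauchySeq_tendsto_of_complete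
    (cauchySeq_of_le_geometric (1 / 2) 2 (by norm_num) hdist)
  have hya : Tendsto y atTop (𝓝 a) := (tendsto_iff_of_dist
    (squeeze_zero (fun _ => dist_nonneg) (fun j => (hy j).le) hpow)).2 ha
  exact ⟨a, hC.mem_of_tendsto hya (Eventually.of_forall hyC), ha⟩

/-- The **Kuratowski–Ryll-Nardzewski measurable selection theorem**. -/
theorem IsWeaklyMeasurable.exists_measurable_selection [TopologicalSpace E] [PolishSpace E]
    [Nonempty E] [MeasurableSpace E] [BorelSpace E] {F : Ω → Set E} (hF : IsWeaklyMeasurable F)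
    (hF_closed : ∀ ω, IsClosed (F ω)) :
    ∃ g : Ω → E, Measurable g ∧ ∀ ω, (F ω).Nonempty → g ω ∈ F ω := by
  let := TopologicalSpace.upgradeIsCompletelyMetrizable E
  obtain ⟨x, hx_meas, hx⟩ :=
    hF.exists_measurable_approx (ε := fun j => (1 / 2) ^ j) fun j => by positivity
  refine ⟨fun ω => limUnder atTop (x · ω),
    (StronglyMeasurable.limUnder fun j => (hx_meas j).stronglyMeasurable).measurable,
    fun ω hω => ?_⟩
  obtain ⟨a, haF, ha⟩ := exists_mem_tendsto_of_inter_ball_nonempty (hF_closed ω) (hx ω hω)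
  simpa only [ha.limUnder_eq] using haF

end MeasurableSelection

section ClusterPoints

variable {ι E : Type*} {l : Filter ι}

lemma exists_mem_mapClusterPt_iff_frequently [TopologicalSpace E] {K : Set E}
    (hK : IsCompact K) {κ : Type*} {p : κ → Prop} {V : κ → Set E} (hV : (𝓝ˢ K).HasBasis p V)
    {u : ι → E} : (∃ x ∈ K, MapClusterPt x l u) ↔ ∀ m, p m → ∃ᶠ i in l, u i ∈ V m := by
  rw [← not_iff_not]
  calc (¬∃ x ∈ K, MapClusterPt x l u)
      ↔ ∀ x ∈ K, Disjoint (𝓝 x) (map u l) := by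
        simp only [MapClusterPt, ClusterPt, neBot_iff, disjoint_iff, not_exists, not_and, not_not,
          ne_eq]
    _ ↔ Disjoint (𝓝ˢ K) (map u l) := hK.disjoint_nhdsSet_left.symm
    _ ↔ ∃ m, p m ∧ ∀ᶠ i in l, u i ∈ (V m)ᶜ := hV.disjoint_iff_left
    _ ↔ ¬∀ m, p m → ∃ᶠ i in l, u i ∈ V m := by
        simp only [not_forall, not_frequently, mem_compl_iff, exists_prop]

lemma exists_mapClusterPt_of_liminf_enorm_lt_top [SeminormedAddCommGroup E] [ProperSpace E]
    {u : ι → E} (hu : liminf (‖u ·‖ₑ) l < ⊤) : ∃ x, MapClusterPt x l u := by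
  obtain ⟨r, hr, hr_top⟩ := exists_between hu
  lift r to NNReal using hr_top.ne
  have hfreq : ∃ᶠ i in l, u i ∈ closedBall 0 (r : ℝ) :=
    (frequently_lt_of_liminf_lt (by isBoundedDefault) hr).mono fun i hi =>
      mem_closedBall_zero_iff.2 (enorm_le_coe.1 hi.le)
  exact ((isCompact_closedBall 0 _).exists_mapClusterPt_of_frequently hfreq).imp fun _ => And.right

variable {Ω : Type*} [MeasurableSpace Ω] [Countable ι] [l.IsCountablyGenerated]
  [MeasurableSpace E]

lemma measurable_exists_mem_mapClusterPt [PseudoMetricSpace E] [OpensMeasurableSpace E]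
    {f : ι → Ω → E} (hf : ∀ i, Measurable (f i)) {K : Set E} (hK : IsCompact K) :
    Measurable fun ω => ∃ x ∈ K, MapClusterPt x l (f · ω) := by
  have hbasis : (𝓝ˢ K).HasBasis (fun _ => True) fun m : ℕ => thickening (1 / (m + 1)) K :=
    (hasBasis_nhdsSet_thickening hK).to_hasBasis
      (fun δ hδ => (exists_nat_one_div_lt hδ).imp fun m hm => ⟨trivial, thickening_mono hm.le K⟩)
      fun m _ => ⟨1 / (m + 1), Nat.one_div_pos_of_nat, Subset.rfl⟩
  simp only [exists_mem_mapClusterPt_iff_frequently hK hbasis, true_imp_iff]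
  exact .forall fun m => measurable_frequently fun i =>
    measurableSet_setOfPred.1 (hf i isOpen_thickening.measurableSet)

lemma isWeaklyMeasurable_setOfPred_mapClusterPt [TopologicalSpace E]
    [TopologicalSpace.PseudoMetrizableSpace E] [SigmaCompactSpace E] [OpensMeasurableSpace E]
    {f : ι → Ω → E} (hf : ∀ i, Measurable (f i)) :
    IsWeaklyMeasurable fun ω => {x | MapClusterPt x l (f · ω)} := by
  let := TopologicalSpace.pseudoMetrizableSpacePseudoMetric E
  intro U hU
  obtain ⟨C, hC_closed, -, rfl, -⟩ := hU.exists_iUnion_isClosed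
  let K (m n : ℕ) : Set E := C m ∩ compactCovering E n
  have hK : ∀ m n, IsCompact (K m n) := fun m n =>
    (isCompact_compactCovering E n).inter_left (hC_closed m)
  have hK_iUnion : ⋃ m, C m = ⋃ m, ⋃ n, K m n := by
    simp only [K, ← inter_iUnion, iUnion_compactCovering, inter_univ]
  have hhit : ∀ ω, ({x | MapClusterPt x l (f · ω)} ∩ ⋃ m, C m).Nonempty ↔
      ∃ m n, ∃ x ∈ K m n, MapClusterPt x l (f · ω) := fun ω => by
    rw [hK_iUnion, inter_comm]
    simp only [iUnion_inter, nonempty_iUnion]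
    rfl
  simp only [hhit]
  exact measurableSet_setOfPred.2
    (.exists fun m => .exists fun n => measurable_exists_mem_mapClusterPt hf (hK m n))

end ClusterPoints

theorem stmt8_general {Ω E : Type*} [MeasurableSpace Ω] [TopologicalSpace E] [PolishSpace E]
    [SigmaCompactSpace E] [Nonempty E] [MeasurableSpace E] [BorelSpace E] {f : ℕ → Ω → E}
    (hf : ∀ k, Measurable (f k)) :
    ∃ τ : ℕ → Ω → ℕ,
      (∀ k, Measurable (τ k)) ∧
      (∀ k ω, τ k ω < τ (k + 1) ω) ∧
      ∃ g : Ω → E, Measurable g ∧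
        ∀ ω, (∃ x, MapClusterPt x atTop (f · ω)) →
          Tendsto (fun k => f (τ k ω) ω) atTop (𝓝 (g ω)) := by
  let := TopologicalSpace.upgradeIsCompletelyMetrizable E
  obtain ⟨g, hg, hg_cluster⟩ :=
    (isWeaklyMeasurable_setOfPred_mapClusterPt (l := atTop) hf).exists_measurable_selection
      fun ω => isClosed_setOfPred_clusterPt
  obtain ⟨τ, hτ, hτ_lt, hτ_lim⟩ := exists_measurable_subseq_tendsto_of_mapClusterPt hf hg
  exact ⟨τ, hτ, hτ_lt, g, hg, fun ω hω => hτ_lim ω (hg_cluster ω hω)⟩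

/-- from a sequence of random vectors with `liminf_n |f_n| < ∞` a.s. one
can extract a measurable random subsequence converging almost surely. -/
theorem stmt8 {Ω : Type*} {mΩ : MeasurableSpace Ω} (P : Measure Ω) [IsProbabilityMeasure P]
    (n : ℕ) (f : ℕ → Ω → Fin n → ℝ) (hfmeas : ∀ k, Measurable (f k))
    (hliminf : ∀ᵐ ω ∂P, Filter.liminf (fun k => (‖f k ω‖₊ : ℝ≥0∞)) atTop < ⊤) :
    ∃ τ : ℕ → Ω → ℕ,
      (∀ k, Measurable (τ k)) ∧
      (∀ k ω, τ k ω < τ (k + 1) ω) ∧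
      ∃ g : Ω → Fin n → ℝ, Measurable g ∧
        ∀ᵐ ω ∂P, Tendsto (fun k => f (τ k ω) ω) atTop (nhds (g ω)) := by
  obtain ⟨τ, hτ, hτ_lt, g, hg, hlim⟩ := stmt8_general hfmeas
  exact ⟨τ, hτ, hτ_lt, g, hg, hliminf.mono fun ω hω =>
    hlim ω (exists_mapClusterPt_of_liminf_enorm_lt_top hω)⟩

end
end
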